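/- arXiv:2201.04514 — 2 statements merged into one kernel-verified Lean document; each statement's English description precedes it below -/
import Mathlib

section
/- (Static central limit theorem for the equilibrium fluctuation field.) Let d ≥ 2 and let h : 𝕋^d × ℝ^d → ℝ be bounded measurable. As ε → 0, the random variable ζ^{ε,eq}(h) under ℙ^eq_ε converges in distribution to a centered Gaussian random variable with variance σ² := ∫_{𝕋^d×ℝ^d} h(z)² 𝓜(v) dz; equivalently, for every ξ ∈ ℝ, 𝔼^eq_ε[ exp( i ξ ζ^{ε,eq}(h) ) ] → exp( −ξ² σ² / 2 ). -/
open MeasureTheory Real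

noncomputable section

/-- The unit `d`-dimensional torus. -/
abbrev Torus (d : ℕ) := Fin d → AddCircle (1 : ℝ)

/-- The one-particle phase space `𝕋^d × ℝ^d`. -/
abbrev Phase (d : ℕ) := Torus d × EuclideanSpace ℝ (Fin d)

/-- The flat (Euclidean) distance on the torus. -/
noncomputable def torusDist {d : ℕ} (x y : Torus d) : ℝ :=
  Real.sqrt (∑ i, dist (x i) (y i) ^ 2)

/-- The Maxwellian `𝓜(v) = (2π)^{-d/2} exp(-|v|²/2)`. -/
noncomputable def maxwellian {d : ℕ} (v : EuclideanSpace ℝ (Fin d)) : ℝ :=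
  (2 * π) ^ (-(d : ℝ) / 2) * Real.exp (-‖v‖ ^ 2 / 2)

/- The hard-sphere exclusion indicator `1_{𝒟^ε_N}` (as a function of the positions). -/
open Classical in
noncomputable def exclInd {d : ℕ} (ε : ℝ) {N : ℕ} (X : Fin N → Torus d) : ℝ :=
  if ∀ i j : Fin N, i ≠ j → ε < torusDist (X i) (X j) then 1 else 0

/-- The Boltzmann–Grad scaling factor `μ_ε = ε^{-(d-1)}`. -/
noncomputable def muBG (d : ℕ) (ε : ℝ) : ℝ := (ε ^ (d - 1))⁻¹

/-- The grand canonical partition function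
`𝒵^ε = ∑_N (μ_ε^N / N!) ∫ ∏_{i≠j} 1_{|x_i - x_j| > ε} dX_N` (the `N = 0` term equals `1`). -/
noncomputable def partitionZ (d : ℕ) (ε : ℝ) : ℝ :=
  ∑' N : ℕ, muBG d ε ^ N / (Nat.factorial N : ℝ) * ∫ X : Fin N → Torus d, exclInd ε X

/-- The grand canonical equilibrium expectation of a functional
`F : ⨆_N (𝕋^d × ℝ^d)^N → ℝ`. -/
noncomputable def gceExp (d : ℕ) (ε : ℝ) (F : (N : ℕ) → (Fin N → Phase d) → ℝ) : ℝ :=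
  (partitionZ d ε)⁻¹ *
    ∑' N : ℕ, muBG d ε ^ N / (Nat.factorial N : ℝ) *
      ∫ Z : Fin N → Phase d,
        exclInd ε (fun i => (Z i).1) * (∏ i, maxwellian (Z i).2) * F N Z

/-- The empirical density `π^ε(h) = μ_ε^{-1} ∑_i h(z_i)`. -/
noncomputable def empDens {d : ℕ} (ε : ℝ) (h : Phase d → ℝ) (N : ℕ)
    (Z : Fin N → Phase d) : ℝ :=
  (muBG d ε)⁻¹ * ∑ i, h (Z i)

/-- The equilibrium fluctuation field `ζ^{ε,eq}(h) = √μ_ε (π ^ε(h) - 𝔼^eq_ε[π^ε(h)])`. -/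
noncomputable def fluctField (d : ℕ) (ε : ℝ) (h : Phase d → ℝ) (N : ℕ)
    (Z : Fin N → Phase d) : ℝ :=
  Real.sqrt (muBG d ε) * (empDens ε h N Z - gceExp d ε (fun M W => empDens ε h M W))

end

/-- The grand canonical equilibrium expectation of a complex-valued functional. -/
noncomputable def gceExpC (d : ℕ) (ε : ℝ) (F : (N : ℕ) → (Fin N → Phase d) → ℂ) : ℂ :=
  ((partitionZ d ε : ℝ) : ℂ)⁻¹ *
    ∑' N : ℕ, ((muBG d ε ^ N / (Nat.factorial N : ℝ) : ℝ) : ℂ) *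
      ∫ Z : Fin N → Phase d,
        ((exclInd ε (fun i => (Z i).1) * ∏ i, maxwellian (Z i).2 : ℝ) : ℂ) * F N Z

/-! For a gas with pair Boltzmann factor `f` and activity `a`, the Mecke formula
(`integral_sumDelete`) identifies the derivative of `log 𝒵` in the activity with the insertion ratio
`x ↦ 𝒵 (f x * a) / 𝒵 a`. When the mean number `c * b` of exclusions felt by a point is small, the
logarithm of this ratio is Lipschitz in `a`: a Lipschitz bound inserted in the derivative formula
comes back improved, so an a priori bound iterates to one of order `b`. Integrating the derivative
along the segment from `c` to `c * exp u` then gives `log 𝒵 (c * exp u)` to second order in `u`, as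
for the ideal gas up to errors `c * ‖u‖ ^ 3` and `c ^ 2 * b * ‖u‖ ^ 2`. For `u = t * h / √c` this is
the convergence of the real moment generating functions of the fluctuation field, which
Vitali's theorem carries to imaginary arguments. -/

open Filter Topology ProbabilityTheory
open scoped Nat ENNReal

section ComplexAnalysis

variable {ι : Type*} {F : ι → ℂ → ℂ} {G : ℂ → ℂ}

lemma norm_taylorCoeff_le {f : ℂ → ℂ} (hf : Differentiable ℂ f) {R M : ℝ} (hR : 0 < R)
    (hM : ∀ z ∈ Metric.closedBall 0 R, ‖f z‖ ≤ M) (n : ℕ) :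
    ‖(n ! : ℂ)⁻¹ * iteratedDeriv n f 0‖ ≤ M / R ^ n := by
  have hCauchy := Complex.norm_iteratedDeriv_le_of_forall_mem_sphere_norm_le n hR hf.diffContOnCl
    fun z hz => hM z (Metric.sphere_subset_closedBall hz)
  rw [norm_mul, norm_inv, Complex.norm_natCast, inv_mul_le_iff₀ (by positivity)]
  exact hCauchy.trans_eq (mul_div_assoc _ _ _)

lemma differentiable_tsum_pow_mul {β : ℕ → ℂ}
    (hβ : ∀ R > 0, ∃ M, ∀ n, ‖β n‖ ≤ M / R ^ n) :
    Differentiable ℂ fun z => ∑' n, z ^ n * β n := by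
  intro z
  set R := ‖z‖ + 1
  have hR : 0 < R := by positivity
  obtain ⟨M, hM⟩ := hβ (2 * R) (by positivity)
  have hz : Metric.ball 0 R ∈ 𝓝 z := Metric.isOpen_ball.mem_nhds (by simp [R])
  refine (Complex.differentiableOn_tsum_of_summable_norm
    (u := fun n => M * (1 / 2 : ℝ) ^ n) (summable_geometric_two.mul_left M)
    (fun n => by fun_prop) Metric.isOpen_ball fun n w hw => ?_).differentiableAt hz
  have hw : ‖w‖ ≤ R := (mem_ball_zero_iff.1 hw).le
  calc ‖w ^ n * β n‖ ≤ R ^ n * (M / (2 * R) ^ n) := by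
        rw [norm_mul, norm_pow]
        gcongr
        exact hM n
    _ = M * (1 / 2 : ℝ) ^ n := by
        rw [mul_pow, div_pow, one_pow]
        field_simp

-- Taylor coefficients converge along an ultrafilter by compactness, and the Cauchy estimates
-- dominate the Taylor series.
lemma exists_differentiable_tendsto_of_ultrafilter (U : Ultrafilter ι)
    (hF : ∀ᶠ i in U, Differentiable ℂ (F i))
    (hbdd : ∀ R : ℝ, ∃ M, ∀ᶠ i in U, ∀ z ∈ Metric.closedBall 0 R, ‖F i z‖ ≤ M) :
    ∃ H : ℂ → ℂ, Differentiable ℂ H ∧ ∀ z, Tendsto (F · z) U (𝓝 (H z)) := by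
  choose M hM using hbdd
  let a : ι → ℕ → ℂ := fun i n => (n ! : ℂ)⁻¹ * iteratedDeriv n (F i) 0
  have ha : ∀ R > 0, ∀ᶠ i in U, ∀ n, ‖a i n‖ ≤ M R / R ^ n := fun R hR => by
    filter_upwards [hF, hM R] with i hi hMi n using norm_taylorCoeff_le hi hR hMi n
  have hconv : ∀ n, ∃ b, Tendsto (a · n) U (𝓝 b) := fun n => by
    obtain ⟨b, -, hb⟩ := (isCompact_closedBall (0 : ℂ) (M 1)).ultrafilter_le_nhds
      (U.map (a · n)) (by
        rw [le_principal_iff]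
        exact (ha 1 one_pos).mono fun i hi => by simpa using hi n)
    exact ⟨b, hb⟩
  choose β hβ using hconv
  have hβM : ∀ R > 0, ∀ n, ‖β n‖ ≤ M R / R ^ n := fun R hR n =>
    le_of_tendsto (hβ n).norm ((ha R hR).mono fun i hi => hi n)
  refine ⟨fun z => ∑' n, z ^ n * β n,
    differentiable_tsum_pow_mul fun R hR => ⟨M R, hβM R hR⟩, fun z => ?_⟩
  set R := 2 * (‖z‖ + 1)
  have hTaylor : ∀ᶠ i in U, ∑' n, z ^ n * a i n = F i z := hF.mono fun i hi => by
    rw [← Complex.taylorSeries_eq_of_entire hi 0 z]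
    exact tsum_congr fun n => by simp only [a, sub_zero, smul_eq_mul]; ring
  refine Tendsto.congr' hTaylor (tendsto_tsum_of_dominated_convergence
    (bound := fun n => M R * (1 / 2 : ℝ) ^ n) (summable_geometric_two.mul_left (M R))
    (fun n => (hβ n).const_mul (z ^ n)) ?_)
  filter_upwards [ha R (by positivity)] with i hi n
  calc ‖z ^ n * a i n‖ ≤ (‖z‖ + 1) ^ n * (M R / R ^ n) := by
        rw [norm_mul, norm_pow]
        gcongr
        · linarith
        · exact hi n
    _ = M R * (1 / 2 : ℝ) ^ n := by
        rw [mul_pow, div_pow, one_pow]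
        field_simp

theorem tendsto_of_frequently_tendsto_of_differentiable {l : Filter ι} {w₀ : ℂ}
    (hF : ∀ᶠ i in l, Differentiable ℂ (F i))
    (hbdd : ∀ R : ℝ, ∃ M, ∀ᶠ i in l, ∀ z ∈ Metric.closedBall 0 R, ‖F i z‖ ≤ M)
    (hG : Differentiable ℂ G) (hlim : ∃ᶠ w in 𝓝[≠] w₀, Tendsto (F · w) l (𝓝 (G w))) (z : ℂ) :
    Tendsto (F · z) l (𝓝 (G z)) := by
  refine tendsto_iff_ultrafilter _ _ _ |>.2 fun U hU => ?_
  obtain ⟨H, hH, hFH⟩ := exists_differentiable_tendsto_of_ultrafilter U (hU hF)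
    fun R => (hbdd R).imp fun _ hM => hU hM
  have hHG : ∃ᶠ w in 𝓝[≠] w₀, H w = G w :=
    hlim.mono fun w hw => tendsto_nhds_unique (hFH w) (hw.mono_left hU)
  have hHG : H = G := AnalyticOnNhd.eq_of_frequently_eq
    (fun w _ => hH.analyticAt w) (fun w _ => hG.analyticAt w) hHG
  exact hHG ▸ hFH z

lemma frequently_ofReal_nhdsNE {p : ℂ → Prop} (hp : ∀ t : ℝ, p t) : ∃ᶠ w in 𝓝[≠] (0 : ℂ), p w := by
  have hreal : Tendsto ((↑) : ℝ → ℂ) (𝓝[≠] 0) (𝓝[≠] 0) :=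
    tendsto_nhdsWithin_of_tendsto_nhds_of_eventually_within _
      ((Complex.continuous_ofReal.tendsto 0).mono_left nhdsWithin_le_nhds)
      (eventually_mem_nhdsWithin.mono fun t ht => by simpa using ht)
  exact hreal.frequently (Frequently.of_forall hp)

end ComplexAnalysis

section ComplexMGF

variable {ι : Type*} {l : Filter ι} {Ω : ι → Type*} [∀ i, MeasurableSpace (Ω i)]
  {X : ∀ i, Ω i → ℝ} {μ : ∀ i, Measure (Ω i)}

lemma mgf_le_mgf_add_mgf_neg {Ω : Type*} [MeasurableSpace Ω] {X : Ω → ℝ} {μ : Measure Ω}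
    (hX : ∀ t, Integrable (fun ω => exp (t * X ω)) μ) {s R : ℝ} (hs : |s| ≤ R) :
    mgf X μ s ≤ mgf X μ R + mgf X μ (-R) := by
  simp only [mgf]
  rw [← integral_add (hX R) (hX (-R))]
  refine integral_mono (hX s) ((hX R).add (hX (-R))) fun ω => ?_
  obtain ⟨hs₁, hs₂⟩ := abs_le.1 hs
  rcases le_total 0 (X ω) with hω | hω
  · calc exp (s * X ω) ≤ exp (R * X ω) := by gcongr
      _ ≤ exp (R * X ω) + exp (-R * X ω) := by linarith [exp_pos (-R * X ω)]
  · calc exp (s * X ω) ≤ exp (-R * X ω) := exp_le_exp.2 (mul_le_mul_of_nonpos_right hs₁ hω)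
      _ ≤ exp (R * X ω) + exp (-R * X ω) := by linarith [exp_pos (R * X ω)]

lemma differentiable_complexMGF {Ω : Type*} [MeasurableSpace Ω] {X : Ω → ℝ} {μ : Measure Ω}
    (hX : ∀ t, Integrable (fun ω => exp (t * X ω)) μ) : Differentiable ℂ (complexMGF X μ) := by
  have huniv : integrableExpSet X μ = Set.univ := Set.eq_univ_of_forall hX
  exact fun z => (hasDerivAt_complexMGF (by simp [huniv])).differentiableAt

theorem tendsto_complexMGF_of_tendsto_mgf {G : ℂ → ℂ}
    (hX : ∀ᶠ i in l, ∀ t, Integrable (fun ω => exp (t * X i ω)) (μ i)) (hG : Differentiable ℂ G)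
    (hlim : ∀ t : ℝ, Tendsto (fun i => (mgf (X i) (μ i) t : ℂ)) l (𝓝 (G t))) (z : ℂ) :
    Tendsto (fun i => complexMGF (X i) (μ i) z) l (𝓝 (G z)) := by
  refine tendsto_of_frequently_tendsto_of_differentiable
    (hX.mono fun i hi => differentiable_complexMGF hi) (fun R => ?_) hG
    (frequently_ofReal_nhdsNE fun t => by simpa only [complexMGF_ofReal] using hlim t) z
  have hsum := ((hlim R).add (hlim (-R : ℝ))).norm
  obtain ⟨M, hM⟩ := hsum.isBoundedUnder_le
  refine ⟨M, ?_⟩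
  filter_upwards [hX, eventually_map.1 hM] with i hi hMi z hz
  rw [← Complex.ofReal_add, Complex.norm_of_nonneg (add_nonneg mgf_nonneg mgf_nonneg)] at hMi
  calc ‖complexMGF (X i) (μ i) z‖ ≤ mgf (X i) (μ i) z.re := norm_complexMGF_le_mgf
    _ ≤ mgf (X i) (μ i) R + mgf (X i) (μ i) (-R) :=
        mgf_le_mgf_add_mgf_neg hi ((Complex.abs_re_le_norm z).trans (mem_closedBall_zero_iff.1 hz))
    _ ≤ M := hMi

end ComplexMGF

section SumMap

variable {Y E : Type*} [MeasurableSpace Y] [NormedAddCommGroup E] {ι : Type*}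
  {X : ι → Type*} [∀ i, MeasurableSpace (X i)] {μ : ∀ i, Measure (X i)} {e : ∀ i, X i → Y}
  {c : ι → ℝ≥0∞} {F : Y → E}

lemma integrable_sum_smul_map_iff [Countable ι] (he : ∀ i, MeasurableEmbedding (e i))
    (hc₀ : ∀ i, c i ≠ 0) (hc : ∀ i, c i ≠ ∞) :
    Integrable F (Measure.sum fun i => c i • (μ i).map (e i)) ↔
      (∀ i, Integrable (fun x => F (e i x)) (μ i)) ∧
        Summable fun i => (c i).toReal * ∫ x, ‖F (e i x)‖ ∂μ i := by
  simp only [integrable_sum_measure_iff, integrable_smul_measure (hc₀ _) (hc _),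
    (he _).integrable_map_iff, integral_smul_measure, (he _).integral_map, smul_eq_mul,
    Function.comp_def]

lemma hasSum_integral_sum_smul_map [NormedSpace ℝ E] (he : ∀ i, MeasurableEmbedding (e i))
    (hF : Integrable F (Measure.sum fun i => c i • (μ i).map (e i))) :
    HasSum (fun i => (c i).toReal • ∫ x, F (e i x) ∂μ i)
      (∫ y, F y ∂Measure.sum fun i => c i • (μ i).map (e i)) := by
  simpa only [integral_smul_measure, (he _).integral_map] using hasSum_integral_measure hF

end SumMap

/-- Configurations of finitely many labelled points of `Ω`. -/
abbrev Config (Ω : Type*) := Σ N : ℕ, Fin N → Ω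

namespace Config

/-- The configuration with points `z 0, …, z (N - 1)`. -/
abbrev mk {Ω : Type*} {N : ℕ} (z : Fin N → Ω) : Config Ω := ⟨N, z⟩

lemma mk_injective {Ω : Type*} {N : ℕ} : Function.Injective (mk : (Fin N → Ω) → Config Ω) :=
  fun _ _ h => eq_of_heq (Sigma.mk.inj h).2

variable {Ω : Type*} [MeasurableSpace Ω]

lemma measurableEmbedding_mk {N : ℕ} :
    MeasurableEmbedding (mk : (Fin N → Ω) → Config Ω) where
  injective := mk_injective
  measurable := fun _ hs => (MeasurableSpace.measurableSet_iInf.1 hs) N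
  measurableSet_image' := fun s hs => MeasurableSpace.measurableSet_iInf.2 fun M => by
    change MeasurableSet ((mk : (Fin M → Ω) → Config Ω) ⁻¹' (mk '' s))
    obtain rfl | hMN := eq_or_ne N M
    · rwa [Set.preimage_image_eq s mk_injective]
    · have hempty : (mk : (Fin M → Ω) → Config Ω) ⁻¹' (mk '' s) = ∅ := by
        grind
      rw [hempty]
      exact MeasurableSet.empty

lemma measurable_of_mk {Y : Type*} [MeasurableSpace Y] {F : Config Ω → Y}
    (hF : ∀ N, Measurable fun z : Fin N → Ω => F (mk z)) : Measurable F :=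
  fun _ hs => MeasurableSpace.measurableSet_iInf.2 fun N => hF N hs

lemma measurable_of_prod_mk {X Y : Type*} [MeasurableSpace X] [MeasurableSpace Y]
    {F : X × Config Ω → Y} (hF : ∀ N, Measurable fun p : X × (Fin N → Ω) => F (p.1, mk p.2)) :
    Measurable F := by
  intro s hs
  have hunion : F ⁻¹' s = ⋃ N, Prod.map id mk ''
      ((fun p : X × (Fin N → Ω) => F (p.1, mk p.2)) ⁻¹' s) := by
    ext ⟨x, N, z⟩
    simp only [Set.mem_preimage, Set.mem_iUnion, Set.mem_image, Prod.exists]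
    constructor
    · exact fun h => ⟨N, x, z, h, rfl⟩
    · rintro ⟨M, x', z', h, h'⟩
      exact h' ▸ h
  rw [hunion]
  exact MeasurableSet.iUnion fun N =>
    (MeasurableEmbedding.id.prodMap measurableEmbedding_mk).measurableSet_image.2 (hF N hs)

end Config

section LebesguePoisson

variable {Ω : Type*} [MeasurableSpace Ω]

/-- The Lebesgue–Poisson measure `∑ N, ν^{⊗N} / N!` on configurations. -/
noncomputable def lebesguePoisson (ν : Measure Ω) : Measure (Config Ω) :=
  Measure.sum fun N => (N ! : ℝ≥0∞)⁻¹ • (Measure.pi fun _ : Fin N => ν).map Config.mk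

variable (ν : Measure Ω) {E : Type*} [NormedAddCommGroup E] {F : Config Ω → E}

instance [SigmaFinite ν] : SFinite (lebesguePoisson ν) := by
  unfold lebesguePoisson; infer_instance

variable {ν}

lemma integrable_lebesguePoisson_iff :
    Integrable F (lebesguePoisson ν) ↔
      (∀ N, Integrable (fun z => F (.mk z)) (Measure.pi fun _ : Fin N => ν)) ∧
        Summable fun N : ℕ => (N ! : ℝ)⁻¹ * ∫ z, ‖F (.mk z)‖ ∂Measure.pi fun _ : Fin N => ν := by
  rw [lebesguePoisson, integrable_sum_smul_map_iff (fun _ => Config.measurableEmbedding_mk)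
    (by simp) (by simp [Nat.factorial_ne_zero])]
  simp only [ENNReal.toReal_inv, ENNReal.toReal_natCast]

lemma hasSum_integral_lebesguePoisson [NormedSpace ℝ E] (hF : Integrable F (lebesguePoisson ν)) :
    HasSum (fun N : ℕ => (N ! : ℝ)⁻¹ • ∫ z, F (.mk z) ∂Measure.pi fun _ : Fin N => ν)
      (∫ Z, F Z ∂lebesguePoisson ν) := by
  have h := hasSum_integral_sum_smul_map (fun _ => Config.measurableEmbedding_mk) hF
  simp only [ENNReal.toReal_inv, ENNReal.toReal_natCast] at h
  exact h

lemma integrable_lebesguePoisson_of_norm_le [IsFiniteMeasure ν] {A K : ℝ}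
    (hF : AEStronglyMeasurable F (lebesguePoisson ν)) (hbound : ∀ Z, ‖F Z‖ ≤ A * K ^ Z.1) :
    Integrable F (lebesguePoisson ν) := by
  have hpow : Integrable (fun Z : Config Ω => A * K ^ Z.1) (lebesguePoisson ν) := by
    refine integrable_lebesguePoisson_iff.2 ⟨fun N => integrable_const (A * K ^ N), ?_⟩
    refine ((Real.summable_pow_div_factorial (|K| * ν.real Set.univ)).mul_left |A|).congr
      fun N => ?_
    simp only [norm_mul, norm_pow, norm_eq_abs, integral_const, measureReal_def, Measure.pi_univ,
      Finset.prod_const, Finset.card_univ, Fintype.card_fin, ENNReal.toReal_pow, smul_eq_mul,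
      mul_pow]
    ring
  exact hpow.mono' hF (ae_of_all _ hbound)

/-- `sumDelete H Z = ∑ x ∈ Z, H x (Z ∖ {x})`, the sum over the points of a configuration of a
function of the point and of the remaining configuration. -/
def Config.sumDelete {Ω : Type*} (H : Ω → Config Ω → ℝ) : Config Ω → ℝ
  | ⟨0, _⟩ => 0
  | ⟨_ + 1, z⟩ => ∑ i, H (z i) (.mk (i.removeNth z))

lemma Config.abs_sumDelete_le {Ω : Type*} {H H' : Ω → Config Ω → ℝ}
    (h : ∀ x W, |H x W| ≤ H' x W) (Z : Config Ω) : |sumDelete H Z| ≤ sumDelete H' Z := by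
  obtain ⟨_ | N, z⟩ := Z
  · simp [sumDelete]
  · exact (Finset.abs_sum_le_sum_abs _ _).trans (Finset.sum_le_sum fun i _ => h _ _)

lemma prod_lebesguePoisson {X : Type*} [MeasurableSpace X] (μ : Measure X) [SFinite μ]
    [SigmaFinite ν] : μ.prod (lebesguePoisson ν) = Measure.sum fun N =>
      (N ! : ℝ≥0∞)⁻¹ • (μ.prod (Measure.pi fun _ : Fin N => ν)).map (Prod.map id Config.mk) := by
  rw [lebesguePoisson, Measure.prod_sum_right]
  congr 1 with N : 1
  rw [Measure.prod_smul_right]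
  congr 1
  conv_lhs => rw [← Measure.map_id (μ := μ)]
  exact Measure.map_prod_map _ _ measurable_id Config.measurableEmbedding_mk.measurable

section Mecke

variable [SigmaFinite ν] {N : ℕ} {H : Ω → (Fin N → Ω) → ℝ}

lemma integrable_sum_removeNth
    (hH : Integrable (Function.uncurry H) (ν.prod (Measure.pi fun _ : Fin N => ν))) :
    Integrable (fun z => ∑ i : Fin (N + 1), H (z i) (i.removeNth z)) (Measure.pi fun _ => ν) :=
  integrable_finsetSum _ fun i _ => (measurePreserving_piFinSuccAbove (fun _ => ν)
    i).integrable_comp_of_integrable hH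

lemma integral_sum_removeNth
    (hH : Integrable (Function.uncurry H) (ν.prod (Measure.pi fun _ : Fin N => ν))) :
    ∫ z, ∑ i : Fin (N + 1), H (z i) (i.removeNth z) ∂(Measure.pi fun _ => ν) =
      (N + 1) * ∫ p, Function.uncurry H p ∂ν.prod (Measure.pi fun _ : Fin N => ν) := by
  have hmp := measurePreserving_piFinSuccAbove (fun _ : Fin (N + 1) => ν)
  calc _ = ∑ i : Fin (N + 1), ∫ z, H (z i) (i.removeNth z) ∂(Measure.pi fun _ => ν) :=
        integral_finsetSum _ fun i _ => (hmp i).integrable_comp_of_integrable hH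
    _ = ∑ _i : Fin (N + 1), ∫ p, Function.uncurry H p ∂ν.prod (Measure.pi fun _ => ν) :=
        Finset.sum_congr rfl fun i _ => (hmp i).integral_comp' (Function.uncurry H)
    _ = _ := by simp

variable {H : Ω → Config Ω → ℝ}

lemma integrable_prod_lebesguePoisson_iff :
    Integrable (Function.uncurry H) (ν.prod (lebesguePoisson ν)) ↔
      (∀ N, Integrable (Function.uncurry fun x (z : Fin N → Ω) => H x (.mk z))
        (ν.prod (Measure.pi fun _ => ν))) ∧ Summable fun N : ℕ => (N ! : ℝ)⁻¹ *
          ∫ p : Ω × (Fin N → Ω), ‖H p.1 (.mk p.2)‖ ∂ν.prod (Measure.pi fun _ => ν) := by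
  rw [prod_lebesguePoisson, integrable_sum_smul_map_iff
    (fun _ => MeasurableEmbedding.id.prodMap Config.measurableEmbedding_mk) (by simp)
    (by simp [Nat.factorial_ne_zero])]
  simp only [ENNReal.toReal_inv, ENNReal.toReal_natCast]
  rfl

lemma integrable_sumDelete
    (hH : Integrable (Function.uncurry H) (ν.prod (lebesguePoisson ν))) :
    Integrable (Config.sumDelete H) (lebesguePoisson ν) := by
  obtain ⟨hint, hsum⟩ := integrable_prod_lebesguePoisson_iff.1 hH
  refine integrable_lebesguePoisson_iff.2 ⟨fun N => ?_, (summable_nat_add_iff 1).1 <|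
    hsum.of_nonneg_of_le (fun N => by positivity) fun N => ?_⟩
  · cases N with
    | zero => exact integrable_zero _ _ _
    | succ N => exact integrable_sum_removeNth (hint N)
  have hnorm := (hint N).norm
  have hle : ∫ z : Fin (N + 1) → Ω, ‖Config.sumDelete H (.mk z)‖ ∂(Measure.pi fun _ => ν) ≤
      (N + 1) * ∫ p : Ω × (Fin N → Ω), ‖H p.1 (.mk p.2)‖ ∂ν.prod (Measure.pi fun _ => ν) :=
    calc _ ≤ ∫ z : Fin (N + 1) → Ω, ∑ i, ‖H (z i) (.mk (i.removeNth z))‖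
          ∂(Measure.pi fun _ => ν) :=
          integral_mono_of_nonneg (ae_of_all _ fun _ => norm_nonneg _)
            (integrable_sum_removeNth (H := fun x z => ‖H x (.mk z)‖) hnorm)
            (ae_of_all _ fun z => norm_sum_le _ _)
      _ = _ := integral_sum_removeNth (H := fun x z => ‖H x (.mk z)‖) hnorm
  calc _ ≤ ((N + 1)! : ℝ)⁻¹ * ((N + 1) *
        ∫ p : Ω × (Fin N → Ω), ‖H p.1 (.mk p.2)‖ ∂ν.prod (Measure.pi fun _ => ν)) := by gcongr
    _ = _ := by
        rw [Nat.factorial_succ]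
        push_cast
        field_simp

theorem integral_sumDelete (hH : Integrable (Function.uncurry H) (ν.prod (lebesguePoisson ν))) :
    ∫ Z, Config.sumDelete H Z ∂lebesguePoisson ν =
      ∫ p, Function.uncurry H p ∂ν.prod (lebesguePoisson ν) := by
  obtain ⟨hint, -⟩ := integrable_prod_lebesguePoisson_iff.1 hH
  have hterm : ∀ N : ℕ, ((N + 1)! : ℝ)⁻¹ • ∫ z : Fin (N + 1) → Ω, ∑ i, H (z i)
        (.mk (i.removeNth z)) ∂(Measure.pi fun _ => ν) =
      (N ! : ℝ≥0∞)⁻¹.toReal • ∫ p : Ω × (Fin N → Ω), Function.uncurry H (Prod.map id .mk p)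
        ∂ν.prod (Measure.pi fun _ => ν) := fun N => by
    rw [integral_sum_removeNth (hint N), Nat.factorial_succ, ENNReal.toReal_inv,
      ENNReal.toReal_natCast, smul_eq_mul, smul_eq_mul]
    push_cast
    field_simp
    rfl
  have hleft := (hasSum_nat_add_iff' 1).2
    (hasSum_integral_lebesguePoisson (integrable_sumDelete hH))
  simp only [Finset.sum_range_one, Config.sumDelete, integral_zero, smul_zero, sub_zero,
    hterm] at hleft
  rw [prod_lebesguePoisson] at hH ⊢
  exact hleft.unique (hasSum_integral_sum_smul_map
    (fun _ => MeasurableEmbedding.id.prodMap Config.measurableEmbedding_mk) hH)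

end Mecke
end LebesguePoisson

section PairWeight

variable {Ω : Type*}

/-- `f x y = exp (-U (x, y))` for a measurable symmetric pair potential `U` with values in
`[0, ∞]`. -/
structure IsBoltzmannFactor [MeasurableSpace Ω] (f : Ω → Ω → ℝ) : Prop where
  measurable : Measurable (Function.uncurry f)
  symm : ∀ x y, f x y = f y x
  nonneg : ∀ x y, 0 ≤ f x y
  le_one : ∀ x y, f x y ≤ 1

/-- The Boltzmann factor of a configuration: the product of `f` over its unordered pairs. -/
def pairWeight (f : Ω → Ω → ℝ) (Z : Config Ω) : ℝ :=
  ∏ i, ∏ j, if j < i then f (Z.2 i) (Z.2 j) else 1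

/-- The unnormalized Gibbs density, with respect to the Lebesgue–Poisson measure, of the gas with
Boltzmann factor `f` and activity `a`. -/
def gibbsWeight (f : Ω → Ω → ℝ) (a : Ω → ℝ) (Z : Config Ω) : ℝ :=
  pairWeight f Z * ∏ i, a (Z.2 i)

variable {f : Ω → Ω → ℝ} {a g : Ω → ℝ}

lemma pairWeight_mk_succ (hf : ∀ x y, f x y = f y x) {N : ℕ} (i : Fin (N + 1))
    (z : Fin (N + 1) → Ω) :
    pairWeight f (.mk z) = pairWeight f (.mk (i.removeNth z)) * ∏ j, f (z i) (i.removeNth z j) := by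
  have hpair : ∀ j : Fin N, (if i.succAbove j < i then f (z i) (z (i.succAbove j)) else 1) *
      (if i < i.succAbove j then f (z (i.succAbove j)) (z i) else 1) =
        f (z i) (z (i.succAbove j)) := fun j => by
    rcases (Fin.succAbove_ne i j).lt_or_gt with h | h
    · simp [h, h.not_gt]
    · simp [h, h.not_gt, hf (z i)]
  simp only [pairWeight, Fin.prod_univ_succAbove _ i, Fin.succAbove_lt_succAbove_iff, lt_irrefl,
    if_false, one_mul, Finset.prod_mul_distrib, Fin.removeNth_apply]
  rw [← mul_assoc, ← Finset.prod_mul_distrib, mul_comm, Finset.prod_congr rfl fun j _ => hpair j]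

lemma gibbsWeight_mk_succ (hf : ∀ x y, f x y = f y x) {N : ℕ} (i : Fin (N + 1))
    (z : Fin (N + 1) → Ω) :
    gibbsWeight f a (.mk z) =
      a (z i) * gibbsWeight f (f (z i) * a) (.mk (i.removeNth z)) := by
  simp only [gibbsWeight, pairWeight_mk_succ hf i, Fin.prod_univ_succAbove _ i, Pi.mul_apply,
    Finset.prod_mul_distrib, Fin.removeNth_apply]
  ring

lemma hasDerivAt_gibbsWeight (hf : ∀ x y, f x y = f y x) (Z : Config Ω) (s : ℝ) :
    HasDerivAt (fun s => gibbsWeight f (a + s • g) Z)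
      (Config.sumDelete (fun x => g x • gibbsWeight f (f x * (a + s • g))) Z) s := by
  obtain ⟨N, z⟩ := Z
  have hprod := (HasDerivAt.fun_finsetProd (u := Finset.univ) (x := s)
    (f := fun i s => (a + s • g) (z i)) (f' := fun i => g (z i)) fun i _ => by
      simpa using ((hasDerivAt_id s).mul_const (g (z i))).const_add (a (z i))).const_mul
        (pairWeight f (.mk z))
  cases N with
  | zero => simpa [gibbsWeight, Config.sumDelete] using hprod
  | succ N =>
    convert! hprod using 1
    rw [Finset.mul_sum]
    refine Finset.sum_congr rfl fun i _ => ?_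
    have herase : ∏ j ∈ Finset.univ.erase i, (a + s • g) (z j) =
        ∏ j, (a + s • g) (i.removeNth z j) := by
      rw [← Finset.compl_singleton, ← Fin.image_succAbove_univ,
        Finset.prod_image Fin.succAbove_right_injective.injOn]
      rfl
    rw [herase, pairWeight_mk_succ hf i]
    simp only [gibbsWeight, Pi.smul_apply, Pi.mul_apply, smul_eq_mul, Finset.prod_mul_distrib]
    ring

variable [MeasurableSpace Ω]

lemma pairWeight_nonneg (hf : IsBoltzmannFactor f) (Z : Config Ω) : 0 ≤ pairWeight f Z :=
  Finset.prod_nonneg fun i _ => Finset.prod_nonneg fun j _ => by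
    split_ifs
    exacts [hf.nonneg _ _, zero_le_one]

lemma pairWeight_le_one (hf : IsBoltzmannFactor f) (Z : Config Ω) : pairWeight f Z ≤ 1 := by
  have hfactor : ∀ i j, 0 ≤ (if j < i then f (Z.2 i) (Z.2 j) else 1) ∧
      (if j < i then f (Z.2 i) (Z.2 j) else 1) ≤ 1 := fun i j => by
    split_ifs
    exacts [⟨hf.nonneg _ _, hf.le_one _ _⟩, ⟨zero_le_one, le_rfl⟩]
  exact Finset.prod_le_one (fun i _ => Finset.prod_nonneg fun j _ => (hfactor i j).1)
    fun i _ => Finset.prod_le_one (fun j _ => (hfactor i j).1) fun j _ => (hfactor i j).2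

lemma gibbsWeight_nonneg (hf : IsBoltzmannFactor f) (ha : ∀ x, 0 ≤ a x) (Z : Config Ω) :
    0 ≤ gibbsWeight f a Z :=
  mul_nonneg (pairWeight_nonneg hf Z) (Finset.prod_nonneg fun _ _ => ha _)

lemma abs_gibbsWeight_le (hf : IsBoltzmannFactor f) {K : ℝ} (ha : ∀ x, |a x| ≤ K)
    (Z : Config Ω) : |gibbsWeight f a Z| ≤ K ^ Z.1 :=
  calc |gibbsWeight f a Z| = pairWeight f Z * ∏ i, |a (Z.2 i)| := by
        rw [gibbsWeight, abs_mul, abs_of_nonneg (pairWeight_nonneg hf Z), Finset.abs_prod]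
    _ ≤ 1 * ∏ _i : Fin Z.1, K := by
        gcongr with i
        exacts [pairWeight_le_one hf Z, ha _]
    _ = K ^ Z.1 := by simp

lemma measurable_gibbsWeight_uncurry (hf : IsBoltzmannFactor f) {X : Type*} [MeasurableSpace X]
    {A : X → Ω → ℝ} (hA : Measurable (Function.uncurry A)) :
    Measurable fun p : X × Config Ω => gibbsWeight f (A p.1) p.2 := by
  refine Config.measurable_of_prod_mk fun N => ?_
  have hpoint : ∀ i, Measurable fun p : X × (Fin N → Ω) => A p.1 (p.2 i) := fun i =>
    hA.comp (by fun_prop : Measurable fun p : X × (Fin N → Ω) => (p.1, p.2 i))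
  have hpair : ∀ i j, Measurable fun p : X × (Fin N → Ω) =>
      if j < i then f (p.2 i) (p.2 j) else 1 := fun i j => by
    split_ifs
    · exact hf.measurable.comp
        (by fun_prop : Measurable fun p : X × (Fin N → Ω) => (p.2 i, p.2 j))
    · exact measurable_const
  exact (Finset.univ.measurable_fun_prod fun i _ => Finset.univ.measurable_fun_prod
    fun j _ => hpair i j).mul (Finset.univ.measurable_fun_prod fun i _ => hpoint i)

lemma measurable_gibbsWeight (hf : IsBoltzmannFactor f) (ha : Measurable a) :
    Measurable (gibbsWeight f a) :=
  (measurable_gibbsWeight_uncurry hf (X := Unit) (A := fun _ => a)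
    (ha.comp measurable_snd)).comp (measurable_prodMk_left (x := ()))

lemma IsBoltzmannFactor.measurable_mul (hf : IsBoltzmannFactor f) (ha : Measurable a) :
    Measurable (Function.uncurry fun x => f x * a) :=
  hf.measurable.mul (ha.comp measurable_snd)

lemma IsBoltzmannFactor.abs_mul_le (hf : IsBoltzmannFactor f) {K : ℝ} (ha : ∀ x, |a x| ≤ K)
    (x y : Ω) : |(f x * a) y| ≤ K := by
  rw [Pi.mul_apply, abs_mul, abs_of_nonneg (hf.nonneg x y)]
  exact (mul_le_of_le_one_left (abs_nonneg _) (hf.le_one x y)).trans (ha y)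

end PairWeight

section GrandPartition

variable {Ω : Type*} [MeasurableSpace Ω]

/-- The grand canonical partition function of the gas with reference measure `ν`, Boltzmann factor
`f` and activity `a`. -/
noncomputable def grandPartition (ν : Measure Ω) (f : Ω → Ω → ℝ) (a : Ω → ℝ) : ℝ :=
  ∫ Z, gibbsWeight f a Z ∂lebesguePoisson ν

variable {ν : Measure Ω} [IsFiniteMeasure ν] {f : Ω → Ω → ℝ} {a g : Ω → ℝ} {K G : ℝ}

lemma integrable_of_abs_le (hg : Measurable g) (hgG : ∀ x, |g x| ≤ G) : Integrable g ν :=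
  .of_bound hg.aestronglyMeasurable G (ae_of_all _ hgG)

lemma integrable_pow_card : Integrable (fun Z : Config Ω => K ^ Z.1) (lebesguePoisson ν) :=
  integrable_lebesguePoisson_of_norm_le (A := 1) (K := |K|)
    (Config.measurable_of_mk fun N => measurable_const (a := K ^ N)).aestronglyMeasurable
    fun Z => by simp

lemma integrable_gibbsWeight (hf : IsBoltzmannFactor f) (ha : Measurable a) (haK : ∀ x, |a x| ≤ K) :
    Integrable (gibbsWeight f a) (lebesguePoisson ν) :=
  integrable_pow_card.mono' (measurable_gibbsWeight hf ha).aestronglyMeasurable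
    (ae_of_all _ (abs_gibbsWeight_le hf haK))

lemma measurable_grandPartition_mul (hf : IsBoltzmannFactor f) (ha : Measurable a) :
    Measurable fun x => grandPartition ν f (f x * a) :=
  (measurable_gibbsWeight_uncurry hf
    (hf.measurable_mul ha)).stronglyMeasurable.integral_prod_right'.measurable

lemma integrable_smul_gibbsWeight_mul (hf : IsBoltzmannFactor f) (ha : Measurable a)
    (haK : ∀ x, |a x| ≤ K) (hg : Integrable g ν) :
    Integrable (Function.uncurry fun x => g x • gibbsWeight f (f x * a))
      (ν.prod (lebesguePoisson ν)) :=
  (hg.norm.mul_prod (integrable_pow_card (K := K))).mono'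
    (hg.aestronglyMeasurable.comp_fst.mul
      (measurable_gibbsWeight_uncurry hf (hf.measurable_mul ha)).aestronglyMeasurable)
    (ae_of_all _ fun p => by
      simp only [Function.uncurry, Pi.smul_apply, norm_smul]
      exact mul_le_mul_of_nonneg_left (abs_gibbsWeight_le hf (hf.abs_mul_le haK p.1) p.2)
        (norm_nonneg _))

lemma integral_sumDelete_gibbsWeight (hf : IsBoltzmannFactor f) (ha : Measurable a)
    (haK : ∀ x, |a x| ≤ K) (hg : Integrable g ν) :
    ∫ Z, Config.sumDelete (fun x => g x • gibbsWeight f (f x * a)) Z ∂lebesguePoisson ν =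
      ∫ x, g x * grandPartition ν f (f x * a) ∂ν := by
  have hint := integrable_smul_gibbsWeight_mul hf ha haK hg
  rw [integral_sumDelete hint, integral_prod _ hint]
  simp only [Function.uncurry, Pi.smul_apply, smul_eq_mul, integral_const_mul, grandPartition]

lemma hasDerivAt_grandPartition (hf : IsBoltzmannFactor f) (ha : Measurable a)
    (haK : ∀ x, |a x| ≤ K) (hg : Measurable g) (hgG : ∀ x, |g x| ≤ G) (s : ℝ) :
    HasDerivAt (fun s => grandPartition ν f (a + s • g))
      (∫ x, g x * grandPartition ν f (f x * (a + s • g)) ∂ν) s := by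
  have hmeas : ∀ t : ℝ, Measurable (a + t • g) := fun t => ha.add (hg.const_smul t)
  have hbound : ∀ t : ℝ, ∀ x, |(a + t • g) x| ≤ K + |t| * G := fun t x => by
    simp only [Pi.add_apply, Pi.smul_apply, smul_eq_mul]
    exact (abs_add_le _ _).trans (add_le_add (haK x) (by rw [abs_mul]; gcongr; exact hgG x))
  have hgint : Integrable g ν := integrable_of_abs_le hg hgG
  have hloc : ∀ t ∈ Metric.ball s 1, ∀ Z, ‖Config.sumDelete (fun x => g x •
      gibbsWeight f (f x * (a + t • g))) Z‖ ≤
        Config.sumDelete (fun _ W => G * (K + (|s| + 1) * G) ^ W.1) Z := fun t ht =>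
    Config.abs_sumDelete_le fun x W => by
      have hG : 0 ≤ G := (abs_nonneg _).trans (hgG x)
      have ht' : |t| ≤ |s| + 1 := by
        have := abs_sub_abs_le_abs_sub t s
        rw [Metric.mem_ball, Real.dist_eq] at ht
        linarith
      rw [Pi.smul_apply, smul_eq_mul, abs_mul]
      gcongr
      · exact hgG x
      · exact abs_gibbsWeight_le hf
          (hf.abs_mul_le (fun y => (hbound t y).trans (by gcongr)) x) W
  have hdom : Integrable (Config.sumDelete fun _ W => G * (K + (|s| + 1) * G) ^ W.1)
      (lebesguePoisson ν) :=
    integrable_sumDelete (H := fun _ W => G * (K + (|s| + 1) * G) ^ W.1)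
      ((integrable_const G).mul_prod integrable_pow_card)
  have hderiv := integrable_sumDelete
    (integrable_smul_gibbsWeight_mul hf (hmeas s) (hbound s) hgint)
  rw [← integral_sumDelete_gibbsWeight hf (hmeas s) (hbound s) hgint]
  exact (hasDerivAt_integral_of_dominated_loc_of_deriv_le (Metric.ball_mem_nhds s one_pos)
    (F := fun t Z => gibbsWeight f (a + t • g) Z)
    (F' := fun t => Config.sumDelete fun x => g x • gibbsWeight f (f x * (a + t • g)))
    (.of_forall fun t => (measurable_gibbsWeight hf (hmeas t)).aestronglyMeasurable)
    (integrable_gibbsWeight hf (hmeas s) (hbound s)) hderiv.aestronglyMeasurable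
    (ae_of_all _ fun Z t ht => hloc t ht Z) hdom
    (ae_of_all _ fun Z t _ => hasDerivAt_gibbsWeight hf.symm Z t)).2

end GrandPartition

/-- A measurable activity with values in `[0, L]`. -/
structure IsActivity {Ω : Type*} [MeasurableSpace Ω] (L : ℝ) (a : Ω → ℝ) : Prop where
  measurable : Measurable a
  nonneg : ∀ x, 0 ≤ a x
  le : ∀ x, a x ≤ L

/-- The mean of `∏ y ∈ Z, f x y` under the Gibbs measure: the probability, in the hard-core case,
that a point can be inserted at `x`. -/
noncomputable def insertionRatio {Ω : Type*} [MeasurableSpace Ω] (ν : Measure Ω) (f : Ω → Ω → ℝ)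
    (a : Ω → ℝ) (x : Ω) : ℝ :=
  grandPartition ν f (f x * a) / grandPartition ν f a

section Activity

variable {Ω : Type*} [MeasurableSpace Ω] {L : ℝ} {a a' : Ω → ℝ}

lemma isActivity_const (hL : 0 ≤ L) : IsActivity L fun _ : Ω => L :=
  ⟨measurable_const, fun _ => hL, fun _ => le_rfl⟩

lemma IsActivity.mono {L' : ℝ} (ha : IsActivity L a) (h : L ≤ L') : IsActivity L' a :=
  ⟨ha.measurable, ha.nonneg, fun x => (ha.le x).trans h⟩

lemma IsActivity.abs_le (ha : IsActivity L a) (x : Ω) : |a x| ≤ L :=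
  (abs_of_nonneg (ha.nonneg x)).trans_le (ha.le x)

lemma IsActivity.mul {f : Ω → Ω → ℝ} (hf : IsBoltzmannFactor f) (ha : IsActivity L a) (x : Ω) :
    IsActivity L (f x * a) where
  measurable := hf.measurable.of_uncurry_left.mul ha.measurable
  nonneg y := mul_nonneg (hf.nonneg x y) (ha.nonneg y)
  le y := (mul_le_of_le_one_left (ha.nonneg y) (hf.le_one x y)).trans (ha.le y)

lemma IsBoltzmannFactor.isActivity {f : Ω → Ω → ℝ} (hf : IsBoltzmannFactor f) (x : Ω) :
    IsActivity 1 (f x) :=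
  ⟨hf.measurable.of_uncurry_left, hf.nonneg x, hf.le_one x⟩

lemma IsActivity.segment (ha : IsActivity L a) (ha' : IsActivity L a') {s : ℝ}
    (hs : s ∈ Set.Icc (0 : ℝ) 1) : IsActivity L (a + s • (a' - a)) where
  measurable := ha.measurable.add ((ha'.measurable.sub ha.measurable).const_smul s)
  nonneg x := (convex_Ici (0 : ℝ)).add_smul_sub_mem (ha.nonneg x) (ha'.nonneg x) hs
  le x := (convex_Iic L).add_smul_sub_mem (ha.le x) (ha'.le x) hs

lemma IsActivity.integrable (ha : IsActivity L a) {ν : Measure Ω} [IsFiniteMeasure ν] :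
    Integrable a ν :=
  integrable_of_abs_le ha.measurable ha.abs_le

end Activity

section LogGrandPartition

variable {Ω : Type*} [MeasurableSpace Ω] {ν : Measure Ω} [IsFiniteMeasure ν] {f : Ω → Ω → ℝ}
  {L s : ℝ} {a a' : Ω → ℝ}

lemma one_le_grandPartition (hf : IsBoltzmannFactor f) (ha : IsActivity L a) :
    1 ≤ grandPartition ν f a := by
  have hsum := hasSum_integral_lebesguePoisson
    (integrable_gibbsWeight (ν := ν) hf ha.measurable ha.abs_le)
  refine le_trans ?_ (le_hasSum hsum 0 fun N _ => mul_nonneg (by positivity)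
    (integral_nonneg fun z => gibbsWeight_nonneg hf ha.nonneg _))
  simp [gibbsWeight, pairWeight, Measure.real]

lemma grandPartition_pos (hf : IsBoltzmannFactor f) (ha : IsActivity L a) :
    0 < grandPartition ν f a :=
  one_pos.trans_le (one_le_grandPartition hf ha)

lemma grandPartition_mono (hf : IsBoltzmannFactor f) (ha : IsActivity L a) (ha' : IsActivity L a')
    (h : a ≤ a') : grandPartition ν f a ≤ grandPartition ν f a' :=
  integral_mono (integrable_gibbsWeight hf ha.measurable ha.abs_le)
    (integrable_gibbsWeight hf ha'.measurable ha'.abs_le) fun Z =>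
      mul_le_mul_of_nonneg_left (Finset.prod_le_prod (fun _ _ => ha.nonneg _) fun _ _ => h _)
        (pairWeight_nonneg hf Z)

lemma insertionRatio_pos (hf : IsBoltzmannFactor f) (ha : IsActivity L a) (x : Ω) :
    0 < insertionRatio ν f a x :=
  div_pos (grandPartition_pos hf (ha.mul hf x)) (grandPartition_pos hf ha)

lemma insertionRatio_le_one (hf : IsBoltzmannFactor f) (ha : IsActivity L a) (x : Ω) :
    insertionRatio ν f a x ≤ 1 :=
  div_le_one_of_le₀ (grandPartition_mono hf (ha.mul hf x) ha fun y =>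
    mul_le_of_le_one_left (ha.nonneg y) (hf.le_one x y)) (grandPartition_pos hf ha).le

lemma isActivity_insertionRatio (hf : IsBoltzmannFactor f) (ha : IsActivity L a) :
    IsActivity 1 (insertionRatio ν f a) where
  measurable := (measurable_grandPartition_mul hf ha.measurable).div_const _
  nonneg x := (insertionRatio_pos hf ha x).le
  le := insertionRatio_le_one hf ha

lemma integrable_mul_insertionRatio (hf : IsBoltzmannFactor f) (ha : IsActivity L a) {g : Ω → ℝ}
    (hg : Integrable g ν) : Integrable (fun x => g x * insertionRatio ν f a x) ν :=
  hg.mul_bdd (c := 1) (isActivity_insertionRatio hf ha).measurable.aestronglyMeasurable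
    (ae_of_all _ (isActivity_insertionRatio hf ha).abs_le)

lemma log_insertionRatio (hf : IsBoltzmannFactor f) (ha : IsActivity L a) (x : Ω) :
    log (insertionRatio ν f a x) =
      log (grandPartition ν f (f x * a)) - log (grandPartition ν f a) :=
  log_div (grandPartition_pos hf (ha.mul hf x)).ne' (grandPartition_pos hf ha).ne'

lemma hasDerivAt_log_grandPartition (hf : IsBoltzmannFactor f) (ha : IsActivity L a)
    (ha' : IsActivity L a') (hs : s ∈ Set.Icc (0 : ℝ) 1) :
    HasDerivAt (fun s => log (grandPartition ν f (a + s • (a' - a))))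
      (∫ x, (a' - a) x * insertionRatio ν f (a + s • (a' - a)) x ∂ν) s := by
  have hbound : ∀ x, |(a' - a) x| ≤ L := fun x =>
    abs_sub_le_of_nonneg_of_le (ha'.nonneg x) (ha'.le x) (ha.nonneg x) (ha.le x)
  have hderiv := (hasDerivAt_grandPartition (ν := ν) hf ha.measurable ha.abs_le
    (ha'.measurable.sub ha.measurable) hbound s).log
      (grandPartition_pos hf (ha.segment ha' hs)).ne'
  simpa only [insertionRatio, ← mul_div_assoc, integral_div] using hderiv

lemma exists_log_grandPartition_sub_eq (hf : IsBoltzmannFactor f) (ha : IsActivity L a)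
    (ha' : IsActivity L a') :
    ∃ s ∈ Set.Icc (0 : ℝ) 1, log (grandPartition ν f a') - log (grandPartition ν f a) =
      ∫ x, (a' - a) x * insertionRatio ν f (a + s • (a' - a)) x ∂ν := by
  have hderiv := fun s hs => hasDerivAt_log_grandPartition (ν := ν) (s := s) hf ha ha' hs
  obtain ⟨s, hs, h⟩ := exists_hasDerivAt_eq_slope _ _ one_pos
    (fun s hs => (hderiv s hs).continuousAt.continuousWithinAt)
    fun s hs => hderiv s (Set.Ioo_subset_Icc_self hs)
  exact ⟨s, Set.Ioo_subset_Icc_self hs, by simpa using h.symm⟩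

end LogGrandPartition

lemma abs_sub_le_abs_log_sub {r r' : ℝ} (hr : 0 < r) (hr' : 0 < r') (hr1 : r ≤ 1) (hr1' : r' ≤ 1) :
    |r - r'| ≤ |log r - log r'| := by
  wlog h : r ≤ r' generalizing r r'
  · rw [abs_sub_comm, abs_sub_comm (log r)]
    exact this hr' hr hr1' hr1 (le_of_not_ge h)
  have hlog := log_le_log hr h
  have hratio := one_sub_inv_le_log_of_pos (div_pos hr' hr)
  rw [abs_of_nonpos (sub_nonpos.2 h), abs_of_nonpos (sub_nonpos.2 hlog), neg_sub, neg_sub]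
  rw [log_div hr'.ne' hr.ne', inv_div] at hratio
  refine le_trans ?_ hratio
  rw [one_sub_div hr'.ne', le_div_iff₀ hr']
  exact mul_le_of_le_one_right (sub_nonneg.2 h) hr1'

/-- The logarithm of the insertion ratio is `C`-Lipschitz, for the uniform norms, on the activities
bounded by `L`. -/
def LogInsertionRatioLipschitz {Ω : Type*} [MeasurableSpace Ω] (ν : Measure Ω) (f : Ω → Ω → ℝ)
    (L C : ℝ) : Prop :=
  ∀ ⦃a a' : Ω → ℝ⦄ ⦃δ : ℝ⦄, IsActivity L a → IsActivity L a' → (∀ x, |a' x - a x| ≤ δ) →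
    ∀ x, |log (insertionRatio ν f a' x) - log (insertionRatio ν f a x)| ≤ C * δ

lemma LogInsertionRatioLipschitz.mono {Ω : Type*} [MeasurableSpace Ω] {ν : Measure Ω}
    {f : Ω → Ω → ℝ} {L C C' : ℝ}
    (hC : LogInsertionRatioLipschitz ν f L C) (h : C ≤ C') :
    LogInsertionRatioLipschitz ν f L C' := fun _ _ _ ha ha' hδ x =>
  (hC ha ha' hδ x).trans (mul_le_mul_of_nonneg_right h ((abs_nonneg _).trans (hδ x)))

section Lipschitz

variable {Ω : Type*} [MeasurableSpace Ω] {ν : Measure Ω} [IsProbabilityMeasure ν]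
  {f : Ω → Ω → ℝ} {L b δ C : ℝ} {a a' : Ω → ℝ}

lemma abs_integral_le_of_abs_le {g : Ω → ℝ} (h : ∀ x, |g x| ≤ δ) : |∫ x, g x ∂ν| ≤ δ := by
  simpa using norm_integral_le_of_norm_le_const (μ := ν) (f := g) (ae_of_all ν h)

lemma abs_log_grandPartition_sub_le (hf : IsBoltzmannFactor f) (ha : IsActivity L a)
    (ha' : IsActivity L a') (hδ : ∀ x, |a' x - a x| ≤ δ) :
    |log (grandPartition ν f a') - log (grandPartition ν f a)| ≤ δ := by
  obtain ⟨s, hs, h⟩ := exists_log_grandPartition_sub_eq (ν := ν) hf ha ha'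
  rw [h]
  refine abs_integral_le_of_abs_le fun x => ?_
  have hR := isActivity_insertionRatio (ν := ν) hf (ha.segment ha' hs)
  rw [abs_mul]
  exact (mul_le_of_le_one_right (abs_nonneg _) (hR.abs_le x)).trans (hδ x)

lemma logInsertionRatioLipschitz_two (hf : IsBoltzmannFactor f) :
    LogInsertionRatioLipschitz ν f L 2 := fun a a' δ ha ha' hδ x => by
  have hδx : ∀ y, |(f x * a') y - (f x * a) y| ≤ δ := fun y => by
    rw [Pi.mul_apply, Pi.mul_apply, ← mul_sub, abs_mul, abs_of_nonneg (hf.nonneg x y)]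
    exact (mul_le_of_le_one_left (abs_nonneg _) (hf.le_one x y)).trans (hδ y)
  have hx := abs_log_grandPartition_sub_le (ν := ν) hf (ha.mul hf x) (ha'.mul hf x) hδx
  have h := abs_log_grandPartition_sub_le (ν := ν) hf ha ha' hδ
  rw [log_insertionRatio hf ha, log_insertionRatio hf ha', sub_sub_sub_comm]
  exact (abs_sub _ _).trans (by linarith)

lemma LogInsertionRatioLipschitz.abs_insertionRatio_sub_le
    (hC : LogInsertionRatioLipschitz ν f L C) (hf : IsBoltzmannFactor f) (ha : IsActivity L a)
    (ha' : IsActivity L a') (hδ : ∀ x, |a' x - a x| ≤ δ) (x : Ω) :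
    |insertionRatio ν f a' x - insertionRatio ν f a x| ≤ C * δ :=
  (abs_sub_le_abs_log_sub (insertionRatio_pos hf ha' x) (insertionRatio_pos hf ha x)
    (insertionRatio_le_one hf ha' x) (insertionRatio_le_one hf ha x)).trans (hC ha ha' hδ x)

lemma LogInsertionRatioLipschitz.abs_mul_insertionRatio_sub_le
    (hC : LogInsertionRatioLipschitz ν f L C) (hf : IsBoltzmannFactor f) (ha : IsActivity L a)
    (ha' : IsActivity L a') (hδ : ∀ x, |a' x - a x| ≤ δ) {x : Ω} {r r' : ℝ} (hr : |r| ≤ L)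
    (hrr' : |r' - r| ≤ δ) :
    |r' * insertionRatio ν f a' x - r * insertionRatio ν f a x| ≤ (1 + L * C) * δ := by
  set R := insertionRatio ν f a x
  set R' := insertionRatio ν f a' x
  calc |r' * R' - r * R| = |(r' - r) * R' + r * (R' - R)| := by ring_nf
    _ ≤ |r' - r| * |R'| + |r| * |R' - R| :=
        (abs_add_le _ _).trans_eq (by rw [abs_mul, abs_mul])
    _ ≤ δ * 1 + L * (C * δ) := by
        gcongr
        exacts [(abs_nonneg _).trans hrr', (isActivity_insertionRatio hf ha').abs_le x,
          (abs_nonneg _).trans hr, hC.abs_insertionRatio_sub_le hf ha ha' hδ x]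
    _ = (1 + L * C) * δ := by ring

lemma abs_segment_mul_sub_le (hf : IsBoltzmannFactor f) (hδ : ∀ y, |a' y - a y| ≤ δ) (x y : Ω)
    {s : ℝ} (hs : s ∈ Set.Icc (0 : ℝ) 1) :
    |(a' + s • (f x * a' - a')) y - (a + s • (f x * a - a)) y| ≤ δ := by
  have hcoef : |1 - s * (1 - f x y)| ≤ 1 := abs_le.2
    ⟨by nlinarith [hs.2, hf.nonneg x y, hf.le_one x y], by nlinarith [hs.1, hf.le_one x y]⟩
  calc _ = |1 - s * (1 - f x y)| * |a' y - a y| := by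
        rw [← abs_mul]
        simp only [Pi.add_apply, Pi.smul_apply, Pi.sub_apply, Pi.mul_apply, smul_eq_mul]
        ring_nf
    _ ≤ δ := (mul_le_of_le_one_left (abs_nonneg _) hcoef).trans (hδ y)

/-- The derivative of `log 𝒵` at time `s` on the segment from `a` to `f x * a`. -/
noncomputable def insertionDeriv (ν : Measure Ω) (f : Ω → Ω → ℝ) (a : Ω → ℝ) (x : Ω) (s : ℝ) : ℝ :=
  ∫ y, (f x * a - a) y * insertionRatio ν f (a + s • (f x * a - a)) y ∂ν

-- Along the segment from `a` to `f x * a` the activity moves only within the range of the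
-- interaction with `x`, whence the factor `b`.
lemma LogInsertionRatioLipschitz.abs_insertionDeriv_sub_le
    (hC : LogInsertionRatioLipschitz ν f L C) (hf : IsBoltzmannFactor f)
    (hb : ∀ x, ∫ y, (1 - f x y) ∂ν ≤ b) (ha : IsActivity L a) (ha' : IsActivity L a')
    (hδ : ∀ x, |a' x - a x| ≤ δ) (x : Ω) {s : ℝ} (hs : s ∈ Set.Icc (0 : ℝ) 1) :
    |insertionDeriv ν f a' x s - insertionDeriv ν f a x s| ≤ b * (1 + L * C) * δ := by
  have hseg := ha.segment (ha.mul hf x) hs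
  have hseg' := ha'.segment (ha'.mul hf x) hs
  have hpoint := fun y => hC.abs_mul_insertionRatio_sub_le (x := y) hf hseg hseg'
    (abs_segment_mul_sub_le hf hδ x · hs) (ha.abs_le y) (hδ y)
  have hint : Integrable (fun y => 1 - f x y) ν :=
    (integrable_const 1).sub (hf.isActivity x).integrable
  set R := insertionRatio ν f (a + s • (f x * a - a))
  set R' := insertionRatio ν f (a' + s • (f x * a' - a'))
  calc |insertionDeriv ν f a' x s - insertionDeriv ν f a x s|
      = ‖∫ y, (1 - f x y) * (a y * R y - a' y * R' y) ∂ν‖ := by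
        rw [insertionDeriv, insertionDeriv, ← integral_sub (integrable_mul_insertionRatio hf hseg'
          ((ha'.mul hf x).integrable.sub ha'.integrable)) (integrable_mul_insertionRatio hf hseg
          ((ha.mul hf x).integrable.sub ha.integrable)), norm_eq_abs]
        congr with y
        simp only [Pi.sub_apply, Pi.mul_apply]
        ring
    _ ≤ ∫ y, (1 - f x y) * ((1 + L * C) * δ) ∂ν :=
        norm_integral_le_of_norm_le (hint.mul_const _) (ae_of_all _ fun y => by
          have hf1 : 0 ≤ 1 - f x y := sub_nonneg.2 (hf.le_one x y)
          rw [norm_mul, norm_eq_abs, norm_eq_abs, abs_of_nonneg hf1, abs_sub_comm]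
          exact mul_le_mul_of_nonneg_left (hpoint y) hf1)
    _ = (∫ y, (1 - f x y) ∂ν) * ((1 + L * C) * δ) := integral_mul_const _ _
    _ ≤ b * ((1 + L * C) * δ) := by
        gcongr
        exacts [(abs_nonneg _).trans (hpoint x), hb x]
    _ = b * (1 + L * C) * δ := by ring

lemma LogInsertionRatioLipschitz.improve (hC : LogInsertionRatioLipschitz ν f L C)
    (hf : IsBoltzmannFactor f) (hb : ∀ x, ∫ y, (1 - f x y) ∂ν ≤ b) :
    LogInsertionRatioLipschitz ν f L (b * (1 + L * C)) := fun a a' δ ha ha' hδ x => by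
  have hderiv : ∀ {a}, IsActivity L a → ∀ s ∈ Set.Icc (0 : ℝ) 1, HasDerivWithinAt
      (fun s => log (grandPartition ν f (a + s • (f x * a - a)))) (insertionDeriv ν f a x s)
      (Set.Icc 0 1) s := fun ha _ hs =>
    (hasDerivAt_log_grandPartition hf ha (ha.mul hf x) hs).hasDerivWithinAt
  have h := norm_image_sub_le_of_norm_deriv_le_segment_01'
    (fun s hs => (hderiv ha' s hs).sub (hderiv ha s hs))
    fun s hs => hC.abs_insertionDeriv_sub_le hf hb ha ha' hδ x (Set.Ico_subset_Icc_self hs)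
  rw [log_insertionRatio hf ha, log_insertionRatio hf ha', sub_sub_sub_comm]
  simpa using h

lemma logInsertionRatioLipschitz_two_mul (hf : IsBoltzmannFactor f)
    (hb : ∀ x, ∫ y, (1 - f x y) ∂ν ≤ b) (hLb : L * b ≤ 1 / 2) :
    LogInsertionRatioLipschitz ν f L (2 * b) := fun a a' δ ha ha' hδ x => by
  have hb₀ : 0 ≤ b := (integral_nonneg fun y => sub_nonneg.2 (hf.le_one x y)).trans (hb x)
  have hiter : ∀ n : ℕ, LogInsertionRatioLipschitz ν f L (2 * b + 2 * (1 / 2) ^ n) := fun n => by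
    induction n with
    | zero => exact (logInsertionRatioLipschitz_two hf).mono (by linarith)
    | succ n ih =>
      have hpow : (0 : ℝ) ≤ (1 / 2) ^ n := by positivity
      exact (ih.improve hf hb).mono (by rw [pow_succ]; nlinarith)
  have hlim : Tendsto (fun n : ℕ => 2 * b + 2 * (1 / 2 : ℝ) ^ n) atTop (𝓝 (2 * b)) := by
    simpa using ((tendsto_pow_atTop_nhds_zero_of_lt_one one_half_pos.le one_half_lt_one).const_mul
      (2 : ℝ)).const_add (2 * b)
  exact ge_of_tendsto' (hlim.mul_const δ) fun n => hiter n ha ha' hδ x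

lemma abs_insertionRatio_sub_one_le (hf : IsBoltzmannFactor f)
    (hb : ∀ x, ∫ y, (1 - f x y) ∂ν ≤ b) (hLb : L * b ≤ 1 / 2) (ha : IsActivity L a) (x : Ω) :
    |insertionRatio ν f a x - 1| ≤ 2 * b * L := by
  have hzero : IsActivity L (0 : Ω → ℝ) :=
    ⟨measurable_const, fun _ => le_rfl, fun y => (ha.nonneg y).trans (ha.le y)⟩
  have hone : insertionRatio ν f (0 : Ω → ℝ) x = 1 := by
    rw [insertionRatio, mul_zero, div_self (grandPartition_pos hf hzero).ne']
  rw [← hone]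
  exact (logInsertionRatioLipschitz_two_mul hf hb hLb).abs_insertionRatio_sub_le hf hzero ha
    (by simpa using ha.abs_le) x

lemma abs_log_grandPartition_sub_sub_le (hf : IsBoltzmannFactor f)
    (hb : ∀ x, ∫ y, (1 - f x y) ∂ν ≤ b) (hLb : L * b ≤ 1 / 2) (ha : IsActivity L a)
    (ha' : IsActivity L a') (hδ : ∀ x, |a' x - a x| ≤ δ) :
    |log (grandPartition ν f a') - log (grandPartition ν f a) -
      ∫ x, (a' x - a x) * insertionRatio ν f a x ∂ν| ≤ 2 * b * δ ^ 2 := by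
  obtain ⟨s, hs, h⟩ := exists_log_grandPartition_sub_eq (ν := ν) hf ha ha'
  have hseg := ha.segment ha' hs
  have hint := (ha'.integrable (ν := ν)).sub ha.integrable
  have hsδ : ∀ x, |(a + s • (a' - a)) x - a x| ≤ δ := fun x => by
    simp only [Pi.add_apply, Pi.smul_apply, Pi.sub_apply, smul_eq_mul, add_sub_cancel_left,
      abs_mul, abs_of_nonneg hs.1]
    exact (mul_le_of_le_one_left (abs_nonneg _) hs.2).trans (hδ x)
  have hR := (logInsertionRatioLipschitz_two_mul hf hb hLb).abs_insertionRatio_sub_le hf ha hseg hsδ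
  have hdiff := integral_sub (integrable_mul_insertionRatio hf hseg hint)
    (integrable_mul_insertionRatio hf ha hint)
  simp only [Pi.sub_apply] at h hdiff
  rw [h, ← hdiff]
  refine abs_integral_le_of_abs_le fun x => ?_
  rw [← mul_sub, abs_mul]
  calc _ ≤ δ * (2 * b * δ) := by
        gcongr
        exacts [(abs_nonneg _).trans (hδ x), hδ x, hR x]
    _ = 2 * b * δ ^ 2 := by ring

lemma abs_exp_sub_one_sub_self_sub_sq_le {u : ℝ} (hu : |u| ≤ 1) :
    |exp u - 1 - u - u ^ 2 / 2| ≤ |u| ^ 3 := by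
  have h := exp_bound hu (n := 3) (by norm_num)
  norm_num [Finset.sum_range_succ, Nat.factorial] at h
  calc |exp u - 1 - u - u ^ 2 / 2| = |exp u - (1 + u + u ^ 2 / 2)| := by ring_nf
    _ ≤ |u| ^ 3 * (2 / 9) := h
    _ ≤ |u| ^ 3 := mul_le_of_le_one_right (by positivity) (by norm_num)

lemma abs_tilt_mul_sub_le {b c u r U : ℝ} (hc : 0 ≤ c) (hu : |u| ≤ U) (hU : U ≤ 1) (hr : |r| ≤ 1)
    (hr1 : |r - 1| ≤ 2 * b * c) :
    |(c * exp u - c) * r - (c * (u * r) + c / 2 * u ^ 2)| ≤ c * U ^ 3 + c ^ 2 * b * U ^ 2 := by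
  have hsq : u ^ 2 ≤ U ^ 2 := sq_le_sq.2 (hu.trans (le_abs_self U))
  calc _ = |c * ((exp u - 1 - u - u ^ 2 / 2) * r) + c / 2 * (u ^ 2 * (r - 1))| := by ring_nf
    _ ≤ c * (|exp u - 1 - u - u ^ 2 / 2| * |r|) + c / 2 * (u ^ 2 * |r - 1|) :=
        (abs_add_le _ _).trans_eq (by
          simp only [abs_mul, abs_of_nonneg hc, abs_of_nonneg (div_nonneg hc zero_le_two), abs_sq])
    _ ≤ c * (U ^ 3 * 1) + c / 2 * (U ^ 2 * (2 * b * c)) := by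
        have hU₀ : 0 ≤ U := (abs_nonneg u).trans hu
        gcongr
        exact (abs_exp_sub_one_sub_self_sub_sq_le (hu.trans hU)).trans (by gcongr)
    _ = c * U ^ 3 + c ^ 2 * b * U ^ 2 := by ring

lemma abs_integral_tilt_mul_sub_le {c U : ℝ} (hc : 0 ≤ c) {u R : Ω → ℝ} (hum : Measurable u)
    (hu : ∀ x, |u x| ≤ U) (hU : U ≤ 1) (hR : IsActivity 1 R) (hR1 : ∀ x, |R x - 1| ≤ 2 * b * c) :
    |∫ x, (c * exp (u x) - c) * R x ∂ν - (c * ∫ x, u x * R x ∂ν + c / 2 * ∫ x, u x ^ 2 ∂ν)| ≤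
      c * U ^ 3 + c ^ 2 * b * U ^ 2 := by
  have huint : Integrable u ν := integrable_of_abs_le hum hu
  have huR : Integrable (fun x => c * (u x * R x)) ν :=
    (huint.mul_bdd hR.measurable.aestronglyMeasurable (ae_of_all _ hR.abs_le)).const_mul c
  have husq : Integrable (fun x => c / 2 * u x ^ 2) ν := by
    simpa only [sq] using
      (huint.mul_bdd hum.aestronglyMeasurable (ae_of_all _ hu)).const_mul (c / 2)
  have hexp : Integrable (fun x => (c * exp (u x) - c) * R x) ν :=
    (integrable_of_abs_le (G := c * exp 1 + c) (by fun_prop) fun x => (abs_sub _ _).trans (by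
      rw [abs_of_nonneg hc, abs_of_nonneg (by positivity)]
      gcongr
      exact (le_abs_self _).trans ((hu x).trans hU))).mul_bdd
        hR.measurable.aestronglyMeasurable (ae_of_all _ hR.abs_le)
  rw [← integral_const_mul, ← integral_const_mul, ← integral_add huR husq,
    ← integral_sub hexp (huR.fun_add husq)]
  exact abs_integral_le_of_abs_le fun x => abs_tilt_mul_sub_le hc (hu x) hU (hR.abs_le x) (hR1 x)

theorem abs_log_grandPartition_const_mul_exp_sub_le (hf : IsBoltzmannFactor f)
    (hb : ∀ x, ∫ y, (1 - f x y) ∂ν ≤ b) {c U : ℝ} (hc : 0 ≤ c) (hcb : 6 * c * b ≤ 1) {u : Ω → ℝ}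
    (hum : Measurable u) (hu : ∀ x, |u x| ≤ U) (hU : U ≤ 1) :
    |log (grandPartition ν f fun x => c * exp (u x)) - log (grandPartition ν f fun _ => c) -
      (c * ∫ x, u x * insertionRatio ν f (fun _ => c) x ∂ν + c / 2 * ∫ x, u x ^ 2 ∂ν)| ≤
        c * U ^ 3 + 9 * c ^ 2 * b * U ^ 2 := by
  have hconst : IsActivity c fun _ : Ω => c := isActivity_const hc
  have hexp : ∀ x, exp (u x) ≤ 3 := fun x =>
    (exp_le_exp.2 ((le_abs_self _).trans ((hu x).trans hU))).trans exp_one_lt_three.le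
  have ha' : IsActivity (3 * c) fun x => c * exp (u x) :=
    ⟨by fun_prop, fun x => by positivity, fun x => by nlinarith [hexp x]⟩
  set R := insertionRatio ν f fun _ => c
  have hδ : ∀ x, |c * exp (u x) - c| ≤ 2 * c * U := fun x => by
    have hexp₁ := abs_exp_sub_one_le ((hu x).trans hU)
    rw [← mul_sub_one, abs_mul, abs_of_nonneg hc]
    nlinarith [hu x]
  have hfirst : |log (grandPartition ν f fun x => c * exp (u x)) -
      log (grandPartition ν f fun _ => c) - ∫ x, (c * exp (u x) - c) * R x ∂ν| ≤
        2 * b * (2 * c * U) ^ 2 :=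
    abs_log_grandPartition_sub_sub_le hf hb (by linarith) (hconst.mono (by linarith)) ha' hδ
  have hRone : ∀ x, |R x - 1| ≤ 2 * b * c :=
    abs_insertionRatio_sub_one_le hf hb (by linarith) hconst
  have hsecond := abs_integral_tilt_mul_sub_le (ν := ν) hc hum hu hU
    (isActivity_insertionRatio hf hconst) hRone
  calc _ ≤ 2 * b * (2 * c * U) ^ 2 + (c * U ^ 3 + c ^ 2 * b * U ^ 2) :=
        (abs_sub_le _ _ _).trans (add_le_add hfirst hsecond)
    _ = c * U ^ 3 + 9 * c ^ 2 * b * U ^ 2 := by ring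

end Lipschitz

section WithDensity

lemma integral_withDensity_ofReal {X E : Type*} [MeasurableSpace X] {μ : Measure X}
    [NormedAddCommGroup E] [NormedSpace ℝ E] {m : X → ℝ} (hm : Measurable m)
    (hm₀ : ∀ x, 0 ≤ m x) (F : X → E) :
    ∫ x, F x ∂μ.withDensity (fun x => ENNReal.ofReal (m x)) = ∫ x, m x • F x ∂μ := by
  rw [integral_withDensity_eq_integral_toReal_smul hm.ennreal_ofReal
    (ae_of_all _ fun _ => ENNReal.ofReal_lt_top)]
  simp only [ENNReal.toReal_ofReal (hm₀ _)]

lemma pi_withDensity_ofReal {ι X : Type*} [Fintype ι] [MeasurableSpace X] {μ : Measure X}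
    [SigmaFinite μ] {m : X → ℝ} (hm₀ : ∀ x, 0 ≤ m x) (hm : Integrable m μ) :
    Measure.pi (fun _ : ι => μ.withDensity fun x => ENNReal.ofReal (m x)) =
      (Measure.pi fun _ => μ).withDensity fun z => ENNReal.ofReal (∏ i, m (z i)) := by
  have := isFiniteMeasure_withDensity_ofReal hm.2
  refine Measure.pi_eq fun s hs => ?_
  rw [withDensity_apply _ (MeasurableSet.univ_pi hs), Measure.restrict_pi_pi,
    ← ofReal_integral_eq_lintegral_ofReal (Integrable.fintype_prod fun i => hm.restrict)
      (ae_of_all _ fun z => Finset.prod_nonneg fun i _ => hm₀ _),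
    integral_fintype_prod_eq_prod (f := fun _ => m),
    ENNReal.ofReal_prod_of_nonneg fun i _ => integral_nonneg hm₀]
  refine Finset.prod_congr rfl fun i _ => ?_
  rw [withDensity_apply _ (hs i),
    ofReal_integral_eq_lintegral_ofReal hm.restrict (ae_of_all _ hm₀)]

end WithDensity

/-- The grand canonical Gibbs measure with reference measure `ν`, Boltzmann factor `f` and
activity `a`. -/
noncomputable def gibbsMeasure {Ω : Type*} [MeasurableSpace Ω] (ν : Measure Ω) (f : Ω → Ω → ℝ)
    (a : Ω → ℝ) : Measure (Config Ω) :=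
  (lebesguePoisson ν).withDensity fun Z =>
    ENNReal.ofReal ((grandPartition ν f a)⁻¹ * gibbsWeight f a Z)

/-- The linear statistic `Z ↦ ∑ z ∈ Z, h z` of a one-particle observable `h`. -/
def linearStat {Ω : Type*} (h : Ω → ℝ) (Z : Config Ω) : ℝ :=
  ∑ i, h (Z.2 i)

lemma abs_const_mul_le {Ω : Type*} {h : Ω → ℝ} {B : ℝ} (hB : ∀ x, |h x| ≤ B) {r : ℝ} (x : Ω) :
    |r * h x| ≤ |r| * B := by
  rw [abs_mul]
  gcongr
  exact hB x

section GibbsMeasure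

variable {Ω : Type*} {f : Ω → Ω → ℝ} {a h : Ω → ℝ}

lemma gibbsWeight_mul_exp_linearStat (Z : Config Ω) :
    gibbsWeight f a Z * exp (linearStat h Z) = gibbsWeight f (fun x => a x * exp (h x)) Z := by
  rw [linearStat, exp_sum, gibbsWeight, gibbsWeight, Finset.prod_mul_distrib, mul_assoc]

lemma gibbsWeight_mul_linearStat (hf : ∀ x y, f x y = f y x) (Z : Config Ω) :
    gibbsWeight f a Z * linearStat h Z =
      Config.sumDelete (fun x => (a x * h x) • gibbsWeight f (f x * a)) Z := by
  obtain ⟨_ | N, z⟩ := Z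
  · simp [linearStat, Config.sumDelete]
  · rw [linearStat, Finset.mul_sum]
    refine Finset.sum_congr rfl fun i _ => ?_
    simp only [gibbsWeight_mk_succ hf i, Pi.smul_apply, smul_eq_mul]
    ring

lemma linearStat_const_mul (r : ℝ) (Z : Config Ω) :
    linearStat (fun x => r * h x) Z = r * linearStat h Z :=
  (Finset.mul_sum _ _ _).symm

variable [MeasurableSpace Ω]

lemma measurable_linearStat (hh : Measurable h) : Measurable (linearStat h) :=
  Config.measurable_of_mk fun _ => Finset.univ.measurable_fun_sum fun i _ =>
    hh.comp (measurable_pi_apply i)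

variable {ν : Measure Ω} [IsFiniteMeasure ν] {L B : ℝ}

lemma measurable_gibbsDensity {ν : Measure Ω} (hf : IsBoltzmannFactor f) (ha : IsActivity L a) :
    Measurable fun Z => (grandPartition ν f a)⁻¹ * gibbsWeight f a Z :=
  (measurable_gibbsWeight hf ha.measurable).const_mul _

lemma gibbsDensity_nonneg (hf : IsBoltzmannFactor f) (ha : IsActivity L a) (Z : Config Ω) :
    0 ≤ (grandPartition ν f a)⁻¹ * gibbsWeight f a Z :=
  mul_nonneg (inv_nonneg.2 (grandPartition_pos hf ha).le) (gibbsWeight_nonneg hf ha.nonneg Z)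

lemma integral_gibbsMeasure (hf : IsBoltzmannFactor f) (ha : IsActivity L a) {E : Type*}
    [NormedAddCommGroup E] [NormedSpace ℝ E] (F : Config Ω → E) :
    ∫ Z, F Z ∂gibbsMeasure ν f a =
      (grandPartition ν f a)⁻¹ • ∫ Z, gibbsWeight f a Z • F Z ∂lebesguePoisson ν := by
  rw [gibbsMeasure, integral_withDensity_ofReal (measurable_gibbsDensity hf ha)
    (gibbsDensity_nonneg hf ha), ← integral_smul]
  simp only [mul_smul]

lemma integrable_gibbsMeasure_iff (hf : IsBoltzmannFactor f) (ha : IsActivity L a) {E : Type*}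
    [NormedAddCommGroup E] [NormedSpace ℝ E] {F : Config Ω → E} :
    Integrable F (gibbsMeasure ν f a) ↔
      Integrable (fun Z => gibbsWeight f a Z • F Z) (lebesguePoisson ν) := by
  rw [gibbsMeasure, integrable_withDensity_iff_integrable_smul'
    (measurable_gibbsDensity hf ha).ennreal_ofReal (ae_of_all _ fun _ => ENNReal.ofReal_lt_top)]
  simp only [ENNReal.toReal_ofReal (gibbsDensity_nonneg hf ha _), mul_smul]
  exact integrable_fun_smul_iff (inv_ne_zero (grandPartition_pos hf ha).ne') _

lemma IsActivity.mul_exp (ha : IsActivity L a) (hh : Measurable h) (hB : ∀ x, |h x| ≤ B) :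
    IsActivity (L * exp B) fun x => a x * exp (h x) where
  measurable := ha.measurable.mul hh.exp
  nonneg x := mul_nonneg (ha.nonneg x) (exp_pos _).le
  le x := mul_le_mul (ha.le x) (exp_le_exp.2 ((le_abs_self _).trans (hB x))) (exp_pos _).le
    ((ha.nonneg x).trans (ha.le x))

lemma integrable_exp_linearStat (hf : IsBoltzmannFactor f) (ha : IsActivity L a)
    (hh : Measurable h) (hB : ∀ x, |h x| ≤ B) :
    Integrable (fun Z => exp (linearStat h Z)) (gibbsMeasure ν f a) := by
  have ha' := ha.mul_exp hh hB
  rw [integrable_gibbsMeasure_iff hf ha]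
  simpa only [smul_eq_mul, gibbsWeight_mul_exp_linearStat] using
    integrable_gibbsWeight hf ha'.measurable ha'.abs_le

lemma integrableExpSet_linearStat (hf : IsBoltzmannFactor f) (ha : IsActivity L a)
    (hh : Measurable h) (hB : ∀ x, |h x| ≤ B) :
    integrableExpSet (linearStat h) (gibbsMeasure ν f a) = Set.univ :=
  Set.eq_univ_of_forall fun t => by
    simpa only [integrableExpSet, Set.mem_ofPred_eq, linearStat_const_mul] using
      integrable_exp_linearStat hf ha (hh.const_mul t) (abs_const_mul_le hB)

lemma integrable_linearStat (hf : IsBoltzmannFactor f) (ha : IsActivity L a)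
    (hh : Measurable h) (hB : ∀ x, |h x| ≤ B) : Integrable (linearStat h) (gibbsMeasure ν f a) :=
  memLp_one_iff_integrable.1 <| memLp_of_mem_interior_integrableExpSet
    (by simp [integrableExpSet_linearStat hf ha hh hB]) 1

lemma integral_exp_linearStat (hf : IsBoltzmannFactor f) (ha : IsActivity L a) :
    ∫ Z, exp (linearStat h Z) ∂gibbsMeasure ν f a =
      grandPartition ν f (fun x => a x * exp (h x)) / grandPartition ν f a := by
  simp only [integral_gibbsMeasure hf ha, smul_eq_mul, gibbsWeight_mul_exp_linearStat,
    grandPartition, div_eq_inv_mul]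

lemma integral_linearStat (hf : IsBoltzmannFactor f) (ha : IsActivity L a)
    (hh : Integrable h ν) :
    ∫ Z, linearStat h Z ∂gibbsMeasure ν f a = ∫ x, a x * h x * insertionRatio ν f a x ∂ν := by
  have hah : Integrable (fun x => a x * h x) ν :=
    hh.bdd_mul ha.measurable.aestronglyMeasurable (ae_of_all _ ha.abs_le)
  simp only [integral_gibbsMeasure hf ha, smul_eq_mul, gibbsWeight_mul_linearStat hf.symm,
    integral_sumDelete_gibbsWeight hf ha.measurable ha.abs_le hah, insertionRatio,
    ← mul_div_assoc, integral_div]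
  exact inv_mul_eq_div _ _

end GibbsMeasure

/-- The rescaled centered linear statistic of `h` in the gas of activity `c`. -/
noncomputable def fluctuation {Ω : Type*} [MeasurableSpace Ω] (ν : Measure Ω) (f : Ω → Ω → ℝ)
    (c : ℝ) (h : Ω → ℝ) (Z : Config Ω) : ℝ :=
  √c * (c⁻¹ * linearStat h Z - ∫ W, c⁻¹ * linearStat h W ∂gibbsMeasure ν f fun _ => c)

section CentralLimit

variable {Ω : Type*} [MeasurableSpace Ω] {ν : Measure Ω} [IsProbabilityMeasure ν]
  {f : Ω → Ω → ℝ} {h : Ω → ℝ} {b c B : ℝ}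

lemma mul_fluctuation (hf : IsBoltzmannFactor f) (hc : 0 ≤ c) (hh : Integrable h ν) (t : ℝ)
    (Z : Config Ω) : t * fluctuation ν f c h Z = linearStat (fun x => t / √c * h x) Z -
      c * ∫ x, t / √c * h x * insertionRatio ν f (fun _ => c) x ∂ν := by
  have hscale : √c * c⁻¹ = 1 / √c := by rw [← div_eq_mul_inv, sqrt_div_self']
  rw [fluctuation, integral_const_mul, integral_linearStat hf (isActivity_const hc) hh,
    linearStat_const_mul]
  simp only [mul_assoc, integral_const_mul]
  linear_combination (t * (linearStat h Z - c * ∫ x, h x * insertionRatio ν f (fun _ => c) x ∂ν)) *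
    hscale

lemma integrable_exp_mul_fluctuation (hf : IsBoltzmannFactor f) (hc : 0 ≤ c) (hh : Measurable h)
    (hB : ∀ x, |h x| ≤ B) (t : ℝ) :
    Integrable (fun Z => exp (t * fluctuation ν f c h Z)) (gibbsMeasure ν f fun _ => c) := by
  simp only [mul_fluctuation hf hc (integrable_of_abs_le hh hB), exp_sub]
  exact (integrable_exp_linearStat hf (isActivity_const hc) (hh.const_mul _)
    (abs_const_mul_le hB)).div_const _

lemma integrable_cexp_mul_fluctuation (hf : IsBoltzmannFactor f) (hc : 0 ≤ c) (hh : Measurable h)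
    (hB : ∀ x, |h x| ≤ B) (w : ℂ) :
    Integrable (fun Z => Complex.exp (w * fluctuation ν f c h Z)) (gibbsMeasure ν f fun _ => c) :=
  integrable_cexp_mul_of_re_mem_integrableExpSet
    (((measurable_linearStat hh).const_mul _).sub_const _ |>.const_mul _).aemeasurable
    (integrable_exp_mul_fluctuation hf hc hh hB w.re)

lemma mgf_fluctuation (hf : IsBoltzmannFactor f) (hc : 0 ≤ c) (hh : Measurable h)
    (hB : ∀ x, |h x| ≤ B) (t : ℝ) :
    mgf (fluctuation ν f c h) (gibbsMeasure ν f fun _ => c) t =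
      exp (log (grandPartition ν f fun x => c * exp (t / √c * h x)) -
        log (grandPartition ν f fun _ => c) -
          c * ∫ x, t / √c * h x * insertionRatio ν f (fun _ => c) x ∂ν) := by
  have hact := isActivity_const (Ω := Ω) hc
  have hact' := hact.mul_exp (hh.const_mul (t / √c)) (abs_const_mul_le hB)
  simp only [mgf, mul_fluctuation hf hc (integrable_of_abs_le hh hB), exp_sub, integral_div,
    integral_exp_linearStat hf hact, exp_log (grandPartition_pos hf hact),
    exp_log (grandPartition_pos hf hact')]

lemma abs_cgf_fluctuation_sub_le (hf : IsBoltzmannFactor f)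
    (hb : ∀ x, ∫ y, (1 - f x y) ∂ν ≤ b) (hc : 0 < c) (hcb : 6 * c * b ≤ 1) (hh : Measurable h)
    (hB : ∀ x, |h x| ≤ B) {t : ℝ} (ht : |t| * B ≤ √c) :
    |cgf (fluctuation ν f c h) (gibbsMeasure ν f fun _ => c) t - t ^ 2 / 2 * ∫ x, h x ^ 2 ∂ν| ≤
      (|t| * B) ^ 3 / √c + 9 * (|t| * B) ^ 2 * (c * b) := by
  have hu : ∀ x, |t / √c * h x| ≤ |t| * B / √c := fun x => by
    rw [abs_mul, abs_div, abs_of_nonneg (sqrt_nonneg c), div_mul_eq_mul_div]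
    gcongr
    exact hB x
  have hsq : ∀ r : ℝ, c * (r / √c) ^ 2 = r ^ 2 := fun r => by
    rw [div_pow, sq_sqrt hc.le, mul_div_cancel₀ _ hc.ne']
  have hmain := abs_log_grandPartition_const_mul_exp_sub_le hf hb hc.le hcb (hh.const_mul (t / √c))
    hu (div_le_one_of_le₀ ht (sqrt_nonneg c))
  have hvar : c / 2 * ∫ x, (t / √c * h x) ^ 2 ∂ν = t ^ 2 / 2 * ∫ x, h x ^ 2 ∂ν := by
    simp only [mul_pow _ (h _), integral_const_mul]
    linear_combination (∫ x, h x ^ 2 ∂ν) / 2 * hsq t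
  rw [hvar, ← sub_sub] at hmain
  rw [cgf, mgf_fluctuation hf hc.le hh hB, log_exp]
  refine hmain.trans_eq ?_
  linear_combination (|t| * B / √c + 9 * c * b) * hsq (|t| * B)

section Limit

variable {ι : Type*} {l : Filter ι} {f : ι → Ω → Ω → ℝ} {b c : ι → ℝ}

lemma tendsto_cgf_fluctuation (hf : ∀ᶠ i in l, IsBoltzmannFactor (f i))
    (hb : ∀ᶠ i in l, ∀ x, ∫ y, (1 - f i x y) ∂ν ≤ b i) (hc : Tendsto c l atTop)
    (hcb : Tendsto (fun i => c i * b i) l (𝓝 0)) (hh : Measurable h) (hB : ∀ x, |h x| ≤ B)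
    (t : ℝ) :
    Tendsto (fun i => cgf (fluctuation ν (f i) (c i) h) (gibbsMeasure ν (f i) fun _ => c i) t) l
      (𝓝 (t ^ 2 / 2 * ∫ x, h x ^ 2 ∂ν)) := by
  have hsqrt : Tendsto (fun i => √(c i)) l atTop := tendsto_sqrt_atTop.comp hc
  have herr : Tendsto (fun i => (|t| * B) ^ 3 / √(c i) + 9 * (|t| * B) ^ 2 * (c i * b i)) l
      (𝓝 0) := by
    simpa using (hsqrt.const_div_atTop ((|t| * B) ^ 3)).add (hcb.const_mul (9 * (|t| * B) ^ 2))
  refine tendsto_iff_norm_sub_tendsto_zero.2 (squeeze_zero' (.of_forall fun _ => norm_nonneg _)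
    ?_ herr)
  filter_upwards [hf, hb, hc.eventually_gt_atTop 0,
    hcb.eventually_le_const (by norm_num : (0 : ℝ) < 1 / 6),
    hsqrt.eventually_ge_atTop (|t| * B)] with i hfi hbi hci hcbi hti
  exact abs_cgf_fluctuation_sub_le hfi hbi hci (by linarith) hh hB hti

lemma tendsto_mgf_fluctuation (hf : ∀ᶠ i in l, IsBoltzmannFactor (f i))
    (hb : ∀ᶠ i in l, ∀ x, ∫ y, (1 - f i x y) ∂ν ≤ b i) (hc : Tendsto c l atTop)
    (hcb : Tendsto (fun i => c i * b i) l (𝓝 0)) (hh : Measurable h) (hB : ∀ x, |h x| ≤ B)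
    (t : ℝ) :
    Tendsto (fun i => mgf (fluctuation ν (f i) (c i) h) (gibbsMeasure ν (f i) fun _ => c i) t) l
      (𝓝 (exp (t ^ 2 / 2 * ∫ x, h x ^ 2 ∂ν))) := by
  refine (tendsto_cgf_fluctuation hf hb hc hcb hh hB t).rexp.congr' ?_
  filter_upwards [hf, hc.eventually_ge_atTop 0] with i hfi hci
  exact exp_log (by rw [mgf_fluctuation hfi hci hh hB]; exact exp_pos _)

-- `c * b` bounds the mean number of points interacting with a given one.
theorem tendsto_charFun_fluctuation (hf : ∀ᶠ i in l, IsBoltzmannFactor (f i))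
    (hb : ∀ᶠ i in l, ∀ x, ∫ y, (1 - f i x y) ∂ν ≤ b i) (hc : Tendsto c l atTop)
    (hcb : Tendsto (fun i => c i * b i) l (𝓝 0)) (hh : Measurable h) (hB : ∀ x, |h x| ≤ B)
    (ξ : ℝ) :
    Tendsto (fun i => ∫ Z, Complex.exp (Complex.I * ξ * fluctuation ν (f i) (c i) h Z)
      ∂gibbsMeasure ν (f i) fun _ => c i) l
        (𝓝 (Complex.exp (-(ξ : ℂ) ^ 2 * (∫ x, h x ^ 2 ∂ν : ℝ) / 2))) := by
  have hmgf : ∀ t : ℝ, Tendsto (fun i => (mgf (fluctuation ν (f i) (c i) h)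
      (gibbsMeasure ν (f i) fun _ => c i) t : ℂ)) l
        (𝓝 (Complex.exp ((t : ℂ) ^ 2 / 2 * (∫ x, h x ^ 2 ∂ν : ℝ)))) := fun t => by
    exact_mod_cast (tendsto_mgf_fluctuation hf hb hc hcb hh hB t).ofReal
  have hlim := tendsto_complexMGF_of_tendsto_mgf
    (G := fun z => Complex.exp (z ^ 2 / 2 * (∫ x, h x ^ 2 ∂ν : ℝ)))
    (by
      filter_upwards [hf, hc.eventually_ge_atTop 0] with i hfi hci t
      exact integrable_exp_mul_fluctuation hfi hci hh hB t)
    (by fun_prop) hmgf (Complex.I * ξ)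
  convert! hlim using 3
  rw [mul_pow, Complex.I_sq]
  ring

end Limit
end CentralLimit

section ConstantActivity

variable {Ω : Type*} [MeasurableSpace Ω] {ν : Measure Ω} [IsFiniteMeasure ν] {f : Ω → Ω → ℝ}
  {c : ℝ}

lemma gibbsWeight_const {Ω : Type*} {f : Ω → Ω → ℝ} {c : ℝ} (Z : Config Ω) :
    gibbsWeight f (fun _ => c) Z = c ^ Z.1 * pairWeight f Z := by
  simp [gibbsWeight, mul_comm]

lemma inv_factorial_smul_integral_gibbsWeight_const {ν : Measure Ω} {E : Type*}
    [NormedAddCommGroup E] [NormedSpace ℝ E] {N : ℕ} (F : Config Ω → E) :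
    (N ! : ℝ)⁻¹ • ∫ z, gibbsWeight f (fun _ => c) (.mk z) • F (.mk z)
        ∂Measure.pi (fun _ : Fin N => ν) =
      (c ^ N / N !) • ∫ z, pairWeight f (.mk z) • F (.mk z) ∂Measure.pi fun _ : Fin N => ν := by
  simp only [gibbsWeight_const, mul_smul]
  rw [integral_smul, smul_smul, inv_mul_eq_div]

lemma grandPartition_const_eq_tsum (hf : IsBoltzmannFactor f) (hc : 0 ≤ c) :
    grandPartition ν f (fun _ => c) =
      ∑' N : ℕ, c ^ N / N ! * ∫ z, pairWeight f (.mk z) ∂Measure.pi fun _ : Fin N => ν := by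
  have hact := isActivity_const (Ω := Ω) hc
  have hsum := hasSum_integral_lebesguePoisson
    (integrable_gibbsWeight (ν := ν) hf hact.measurable hact.abs_le)
  rw [grandPartition, ← hsum.tsum_eq]
  simpa only [smul_eq_mul, mul_one] using tsum_congr fun N =>
    inv_factorial_smul_integral_gibbsWeight_const (ν := ν) (f := f) (c := c) (N := N)
      fun _ => (1 : ℝ)

lemma integral_gibbsMeasure_const_eq_tsum (hf : IsBoltzmannFactor f) (hc : 0 ≤ c) {E : Type*}
    [NormedAddCommGroup E] [NormedSpace ℝ E] {F : Config Ω → E}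
    (hF : Integrable F (gibbsMeasure ν f fun _ => c)) :
    ∫ Z, F Z ∂gibbsMeasure ν f (fun _ => c) = (grandPartition ν f fun _ => c)⁻¹ • ∑' N : ℕ,
      (c ^ N / N !) • ∫ z, pairWeight f (.mk z) • F (.mk z) ∂Measure.pi fun _ : Fin N => ν := by
  have hact := isActivity_const (Ω := Ω) hc
  rw [integral_gibbsMeasure hf hact,
    ← (hasSum_integral_lebesguePoisson ((integrable_gibbsMeasure_iff hf hact).1 hF)).tsum_eq]
  simp only [inv_factorial_smul_integral_gibbsWeight_const]

end ConstantActivity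

section Maxwellian

variable {d : ℕ}

lemma maxwellian_nonneg (v : EuclideanSpace ℝ (Fin d)) : 0 ≤ maxwellian v := by
  unfold maxwellian; positivity

lemma measurable_maxwellian : Measurable (maxwellian (d := d)) := by
  unfold maxwellian; fun_prop

lemma integral_maxwellian : ∫ v : EuclideanSpace ℝ (Fin d), maxwellian v = 1 := by
  have hexp : ∀ v : EuclideanSpace ℝ (Fin d), -‖v‖ ^ 2 / 2 = -(1 / 2) * ‖v‖ ^ 2 := fun v => by ring
  simp only [maxwellian, integral_const_mul, hexp]
  rw [GaussianFourier.integral_rexp_neg_mul_sq_norm (by norm_num), finrank_euclideanSpace_fin,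
    div_div_eq_mul_div, div_one, mul_comm π, ← rpow_add (by positivity), neg_div, neg_add_cancel,
    rpow_zero]

lemma integrable_maxwellian : Integrable (maxwellian (d := d)) :=
  .of_integral_ne_zero (by simp [integral_maxwellian])

/-- The Maxwellian law of velocities. -/
noncomputable def maxwellMeasure (d : ℕ) : Measure (EuclideanSpace ℝ (Fin d)) :=
  volume.withDensity fun v => ENNReal.ofReal (maxwellian v)

instance : IsProbabilityMeasure (maxwellMeasure d) := ⟨by
  rw [maxwellMeasure, withDensity_apply _ .univ, setLIntegral_univ,
    ← ofReal_integral_eq_lintegral_ofReal integrable_maxwellian (ae_of_all _ maxwellian_nonneg),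
    integral_maxwellian, ENNReal.ofReal_one]⟩

instance : IsProbabilityMeasure (volume : Measure (AddCircle (1 : ℝ))) :=
  ⟨by rw [AddCircle.measure_univ, ENNReal.ofReal_one]⟩

/-- The law of one particle of the ideal gas: a uniform position and an independent Maxwellian
velocity. -/
noncomputable def phaseMeasure (d : ℕ) : Measure (Phase d) :=
  (volume : Measure (Torus d)).prod (maxwellMeasure d)

instance : IsProbabilityMeasure (phaseMeasure d) := by
  unfold phaseMeasure; infer_instance

lemma measurePreserving_fst_phaseMeasure :
    MeasurePreserving Prod.fst (phaseMeasure d) (volume : Measure (Torus d)) :=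
  measurePreserving_fst

lemma phaseMeasure_eq_withDensity :
    phaseMeasure d = volume.withDensity fun z => ENNReal.ofReal (maxwellian z.2) :=
  prod_withDensity_right measurable_maxwellian.ennreal_ofReal

lemma measurable_maxwellian_snd : Measurable fun z : Phase d => maxwellian z.2 :=
  measurable_maxwellian.comp measurable_snd

lemma integrable_maxwellian_snd : Integrable fun z : Phase d => maxwellian z.2 :=
  integrable_maxwellian.comp_snd _

lemma integral_phaseMeasure {E : Type*} [NormedAddCommGroup E] [NormedSpace ℝ E]
    (F : Phase d → E) : ∫ z, F z ∂phaseMeasure d = ∫ z : Phase d, maxwellian z.2 • F z := by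
  rw [phaseMeasure_eq_withDensity, integral_withDensity_ofReal measurable_maxwellian_snd
    fun _ => maxwellian_nonneg _]

lemma pi_phaseMeasure_eq_withDensity {N : ℕ} : Measure.pi (fun _ : Fin N => phaseMeasure d) =
    volume.withDensity fun Z : Fin N → Phase d => ENNReal.ofReal (∏ i, maxwellian (Z i).2) := by
  rw [phaseMeasure_eq_withDensity]
  exact pi_withDensity_ofReal (fun _ => maxwellian_nonneg _) integrable_maxwellian_snd

lemma integral_pi_phaseMeasure {E : Type*} [NormedAddCommGroup E] [NormedSpace ℝ E] {N : ℕ}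
    (F : (Fin N → Phase d) → E) : ∫ Z, F Z ∂Measure.pi (fun _ => phaseMeasure d) =
      ∫ Z : Fin N → Phase d, (∏ i, maxwellian (Z i).2) • F Z := by
  have hmeas : Measurable fun Z : Fin N → Phase d => ∏ i, maxwellian (Z i).2 :=
    Finset.univ.measurable_fun_prod fun i _ =>
      measurable_maxwellian_snd.comp (measurable_pi_apply i)
  rw [pi_phaseMeasure_eq_withDensity,
    integral_withDensity_ofReal hmeas fun _ => Finset.prod_nonneg fun _ _ => maxwellian_nonneg _]

end Maxwellian

section HardSphere

variable {d : ℕ} {ε : ℝ}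

lemma torusDist_comm (x y : Torus d) : torusDist x y = torusDist y x := by
  simp only [torusDist, dist_comm]

lemma dist_le_torusDist (x y : Torus d) (i : Fin d) : dist (x i) (y i) ≤ torusDist x y :=
  le_sqrt_of_sq_le <|
    Finset.single_le_sum (fun j _ => sq_nonneg (dist (x j) (y j))) (Finset.mem_univ i)

lemma measurableSet_lt_torusDist :
    MeasurableSet {p : Torus d × Torus d | ε < torusDist p.1 p.2} := by
  have hcont : Continuous fun p : Torus d × Torus d => torusDist p.1 p.2 := by
    unfold torusDist; fun_prop
  exact measurableSet_lt measurable_const hcont.measurable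

open Classical in
/-- The Boltzmann factor of hard spheres of diameter `ε`. -/
noncomputable def hardSphereFactor (ε : ℝ) (z w : Phase d) : ℝ :=
  if ε < torusDist z.1 w.1 then 1 else 0

lemma isBoltzmannFactor_hardSphereFactor (ε : ℝ) :
    IsBoltzmannFactor (hardSphereFactor (d := d) ε) where
  measurable := by
    have hpos : Measurable fun p : Phase d × Phase d => (p.1.1, p.2.1) := by fun_prop
    exact Measurable.ite (hpos measurableSet_lt_torusDist) measurable_const measurable_const
  symm z w := by simp only [hardSphereFactor, torusDist_comm]
  nonneg z w := by unfold hardSphereFactor; positivity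
  le_one z w := by unfold hardSphereFactor; split_ifs <;> norm_num

lemma pairWeight_hardSphereFactor {N : ℕ} (Z : Fin N → Phase d) :
    pairWeight (hardSphereFactor ε) (.mk Z) = exclInd ε fun i => (Z i).1 := by
  classical
  have hfactor : ∀ i j : Fin N, (if j < i then hardSphereFactor ε (Z i) (Z j) else 1) =
      if j < i → ε < torusDist (Z i).1 (Z j).1 then 1 else 0 := fun i j => by
    by_cases hij : j < i <;> simp [hij, hardSphereFactor]
  simp only [pairWeight, hfactor, Finset.prod_ite_zero, Finset.prod_const_one, exclInd,
    Finset.mem_univ, true_imp_iff]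
  refine if_congr ⟨fun hlt i j hij => ?_, fun hne i j hij => hne i j hij.ne'⟩ rfl rfl
  rcases hij.lt_or_gt with hij | hij
  · exact torusDist_comm (Z j).1 (Z i).1 ▸ hlt j i hij
  · exact hlt i j hij

lemma measurable_exclInd {N : ℕ} : Measurable (exclInd (d := d) ε (N := N)) := by
  refine Measurable.ite ?_ measurable_const measurable_const
  simp only [Set.ofPred_forall]
  refine .iInter fun i => .iInter fun j => .iInter fun _ => ?_
  have hpair : Measurable fun X : Fin N → Torus d => (X i, X j) := by fun_prop
  exact hpair measurableSet_lt_torusDist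

lemma partitionZ_eq_grandPartition (hμ : 0 ≤ muBG d ε) : partitionZ d ε =
    grandPartition (phaseMeasure d) (hardSphereFactor ε) fun _ => muBG d ε := by
  rw [grandPartition_const_eq_tsum (isBoltzmannFactor_hardSphereFactor ε) hμ, partitionZ]
  refine tsum_congr fun N => congrArg _ ?_
  have hproj := measurePreserving_pi (fun _ : Fin N => phaseMeasure d) _
    fun _ => measurePreserving_fst_phaseMeasure
  simp only [pairWeight_hardSphereFactor]
  rw [volume_pi, ← hproj.map_eq, integral_map hproj.aemeasurable
    measurable_exclInd.aestronglyMeasurable]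

/-- The grand canonical equilibrium measure of hard spheres of diameter `ε` in the
Boltzmann–Grad scaling. -/
noncomputable abbrev hardSphereMeasure (d : ℕ) (ε : ℝ) : Measure (Config (Phase d)) :=
  gibbsMeasure (phaseMeasure d) (hardSphereFactor ε) fun _ => muBG d ε

lemma integral_hardSphereMeasure (hμ : 0 ≤ muBG d ε) {E : Type*} [NormedAddCommGroup E]
    [NormedSpace ℝ E] {F : Config (Phase d) → E} (hF : Integrable F (hardSphereMeasure d ε)) :
    ∫ Z, F Z ∂hardSphereMeasure d ε = (partitionZ d ε)⁻¹ • ∑' N : ℕ, (muBG d ε ^ N / N !) •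
      ∫ Z : Fin N → Phase d,
        (exclInd ε (fun i => (Z i).1) * ∏ i, maxwellian (Z i).2) • F (.mk Z) := by
  rw [integral_gibbsMeasure_const_eq_tsum (isBoltzmannFactor_hardSphereFactor ε) hμ hF,
    partitionZ_eq_grandPartition hμ]
  simp only [pairWeight_hardSphereFactor, integral_pi_phaseMeasure, smul_smul, mul_comm]

lemma gceExp_eq_integral (hμ : 0 ≤ muBG d ε) {F : Config (Phase d) → ℝ}
    (hF : Integrable F (hardSphereMeasure d ε)) :
    gceExp d ε (fun _ Z => F (.mk Z)) = ∫ Z, F Z ∂hardSphereMeasure d ε :=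
  (integral_hardSphereMeasure hμ hF).symm

lemma gceExpC_eq_integral (hμ : 0 ≤ muBG d ε) {F : Config (Phase d) → ℂ}
    (hF : Integrable F (hardSphereMeasure d ε)) :
    gceExpC d ε (fun _ Z => F (.mk Z)) = ∫ Z, F Z ∂hardSphereMeasure d ε := by
  rw [integral_hardSphereMeasure hμ hF, gceExpC]
  simp only [Complex.real_smul, Complex.ofReal_inv]

lemma muBG_pos (hε : 0 < ε) : 0 < muBG d ε := inv_pos.2 (pow_pos hε _)

lemma fluctField_eq_fluctuation (hμ : 0 ≤ muBG d ε) {h : Phase d → ℝ} (hh : Measurable h) {B : ℝ}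
    (hB : ∀ z, |h z| ≤ B) {N : ℕ} (Z : Fin N → Phase d) : fluctField d ε h N Z =
      fluctuation (phaseMeasure d) (hardSphereFactor ε) (muBG d ε) h (.mk Z) := by
  have hint : Integrable (fun W => (muBG d ε)⁻¹ * linearStat h W) (hardSphereMeasure d ε) :=
    (integrable_linearStat (isBoltzmannFactor_hardSphereFactor ε) (isActivity_const hμ) hh
      hB).const_mul _
  rw [fluctuation, ← gceExp_eq_integral hμ hint]
  rfl

lemma gceExpC_cexp_fluctField (hμ : 0 ≤ muBG d ε) {h : Phase d → ℝ} (hh : Measurable h) {B : ℝ}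
    (hB : ∀ z, |h z| ≤ B) (w : ℂ) :
    gceExpC d ε (fun N Z => Complex.exp (w * fluctField d ε h N Z)) =
      ∫ Z, Complex.exp (w * fluctuation (phaseMeasure d) (hardSphereFactor ε) (muBG d ε) h Z)
        ∂hardSphereMeasure d ε := by
  simp only [fluctField_eq_fluctuation hμ hh hB]
  exact gceExpC_eq_integral hμ (integrable_cexp_mul_fluctuation
    (isBoltzmannFactor_hardSphereFactor ε) hμ hh hB w)

lemma one_sub_hardSphereFactor_le (z w : Phase d) : 1 - hardSphereFactor ε z w ≤
    (Set.univ.pi fun i => Metric.closedBall (z.1 i) ε).indicator 1 w.1 := by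
  unfold hardSphereFactor
  split_ifs with hzw
  · rw [sub_self]
    exact Set.indicator_nonneg (fun _ _ => zero_le_one) _
  · rw [sub_zero, Set.indicator_of_mem, Pi.one_apply]
    exact fun i _ => Metric.mem_closedBall'.2 ((dist_le_torusDist _ _ i).trans (not_lt.1 hzw))

lemma volume_real_pi_closedBall_le (hε : 0 ≤ ε) (x : Torus d) :
    volume.real (Set.univ.pi fun i => Metric.closedBall (x i) ε) ≤ (2 * ε) ^ d := by
  rw [measureReal_def, volume_pi_pi]
  simp only [AddCircle.volume_closedBall, Finset.prod_const, Finset.card_univ, Fintype.card_fin,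
    ENNReal.toReal_pow]
  gcongr
  exact ENNReal.toReal_le_of_le_ofReal (by positivity)
    (ENNReal.ofReal_le_ofReal (min_le_right _ _))

lemma integral_one_sub_hardSphereFactor_le (hε : 0 ≤ ε) (z : Phase d) :
    ∫ w, (1 - hardSphereFactor ε z w) ∂phaseMeasure d ≤ (2 * ε) ^ d := by
  set S : Set (Torus d) := Set.univ.pi fun i => Metric.closedBall (z.1 i) ε
  have hS : MeasurableSet S := .univ_pi fun i => Metric.isClosed_closedBall.measurableSet
  have hind : Integrable (S.indicator 1 : Torus d → ℝ) := (integrable_const 1).indicator hS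
  have hfst := measurePreserving_fst_phaseMeasure (d := d)
  calc ∫ w, (1 - hardSphereFactor ε z w) ∂phaseMeasure d
    _ ≤ ∫ w, S.indicator 1 w.1 ∂phaseMeasure d :=
        integral_mono ((integrable_const 1).sub
          ((isBoltzmannFactor_hardSphereFactor ε).isActivity z).integrable)
          (hfst.integrable_comp_of_integrable hind) (one_sub_hardSphereFactor_le z)
    _ = ∫ x, S.indicator 1 x := by
        rw [← hfst.map_eq, integral_map hfst.aemeasurable
          (hfst.map_eq.symm ▸ hind.aestronglyMeasurable)]
    _ = volume.real S := integral_indicator_one hS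
    _ ≤ (2 * ε) ^ d := volume_real_pi_closedBall_le hε z.1

lemma tendsto_muBG_atTop (hd : 2 ≤ d) : Tendsto (muBG d) (𝓝[>] 0) atTop := by
  refine Tendsto.inv_tendsto_nhdsGT_zero (tendsto_nhdsWithin_iff.2 ⟨?_, ?_⟩)
  · have hpow := ((continuous_pow (d - 1)).tendsto (0 : ℝ)).mono_left
      (nhdsWithin_le_nhds (s := Set.Ioi 0))
    rwa [zero_pow (by lia)] at hpow
  · filter_upwards [self_mem_nhdsWithin] with ε hε using pow_pos (Set.mem_Ioi.1 hε) _

lemma muBG_mul_two_mul_pow (hd : d ≠ 0) (hε : ε ≠ 0) : muBG d ε * (2 * ε) ^ d = 2 ^ d * ε := by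
  obtain ⟨k, rfl⟩ := Nat.exists_eq_succ_of_ne_zero hd
  rw [muBG, Nat.succ_sub_one, mul_pow, pow_succ ε]
  field_simp

lemma tendsto_muBG_mul_two_mul_pow (hd : d ≠ 0) :
    Tendsto (fun ε => muBG d ε * (2 * ε) ^ d) (𝓝[>] 0) (𝓝 0) := by
  have hlin : Tendsto (fun ε : ℝ => 2 ^ d * ε) (𝓝[>] 0) (𝓝 0) := by
    simpa using ((continuous_const_mul (2 ^ d)).tendsto (0 : ℝ)).mono_left
      (nhdsWithin_le_nhds (s := Set.Ioi 0))
  refine hlin.congr' ?_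
  filter_upwards [self_mem_nhdsWithin] with ε hε using (muBG_mul_two_mul_pow hd hε.ne').symm

end HardSphere

/-- Static central limit theorem for the equilibrium fluctuation field: the characteristic
function of `ζ^{ε,eq}(h)` converges, as `ε → 0⁺`, to that of a centered Gaussian with
variance `σ² = ∫ h(z)² 𝓜(v) dz`. -/
theorem static_clt (d : ℕ) (hd : 2 ≤ d) (h : Phase d → ℝ) (hm : Measurable h)
    (hb : ∃ B : ℝ, ∀ z, |h z| ≤ B) (ξ : ℝ) :
    Filter.Tendsto
      (fun ε : ℝ =>
        gceExpC d ε (fun N Z => Complex.exp (Complex.I * ξ * fluctField d ε h N Z)))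
      (nhdsWithin 0 (Set.Ioi 0))
      (nhds (Complex.exp (-(ξ : ℂ) ^ 2 *
        ((∫ z : Phase d, h z ^ 2 * maxwellian z.2 : ℝ) : ℂ) / 2))) := by
  obtain ⟨B, hB⟩ := hb
  have hpos : ∀ᶠ ε : ℝ in 𝓝[>] 0, 0 < ε := self_mem_nhdsWithin
  have hvar : ∫ z : Phase d, h z ^ 2 * maxwellian z.2 = ∫ z, h z ^ 2 ∂phaseMeasure d := by
    simp only [integral_phaseMeasure, smul_eq_mul, mul_comm]
  rw [hvar]
  refine (tendsto_charFun_fluctuation (.of_forall isBoltzmannFactor_hardSphereFactor)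
    (hpos.mono fun ε hε => integral_one_sub_hardSphereFactor_le hε.le) (tendsto_muBG_atTop hd)
    (tendsto_muBG_mul_two_mul_pow (by lia)) hm hB ξ).congr' (hpos.mono fun ε hε => ?_)
  exact (gceExpC_cexp_fluctField (muBG_pos hε).le hm hB _).symm
end

section
/- (Static law of large numbers for the empirical density at equilibrium, equation (1.8) at a fixed time.) Let d ≥ 2 and let h : 𝕋^d × ℝ^d → ℝ be bounded measurable. Then for every δ > 0, ℙ^eq_ε( | π^ε(h) − ∫_{𝕋^d×ℝ^d} h(z) 𝓜(v) dz | > δ ) → 0 as ε → 0 (i.e. as μ_ε → ∞). -/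
open MeasureTheory Real

/-!
Dropping the exclusion turns a grand canonical sum into that of an ideal gas, where
`∑ₙ μⁿ/n! ∫ exp (t ∑ h(zᵢ)) = exp (μ 𝔼[exp (t h)])`; with `𝔼[exp (±t h)] = 1 ± t 𝔼[h] + o(t)`
this bounds the unnormalised weight of a deviation of size `δ` by `2 exp (μ (1 - tδ/2))` for
small `t`. Conversely each sphere excludes a volume at most `(2ε)^d`, so when `M (2ε)^d ≤ 1` the
`N`-particle partition function is at least `∏_{k<N} (1 - k/M)` and the binomial theorem yields
`𝒵^ε ≥ (1 + μ/M)^M`. For `M ≈ (2ε)^{-d}` this is `exp (μ (1 - O(ε)))`, since `μ (2ε)^d = O(ε)`.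
The ratio of the two bounds decays like `exp (-cμ)`.
-/

namespace HardSphere

open ProbabilityTheory Filter Topology
open scoped Nat

variable {d N : ℕ} {ε : ℝ}

/-! ### Exponential series -/

lemma hasSum_pow_div_factorial (x : ℝ) : HasSum (fun N : ℕ => x ^ N / N !) (exp x) := by
  rw [exp_eq_exp_ℝ]
  exact NormedSpace.expSeries_div_hasSum_exp x

lemma one_add_div_pow_le_tsum {a : ℕ → ℝ} {x : ℝ} {M : ℕ} (hx : 0 ≤ x)
    (ha : ∀ N, M.descFactorial N / (M : ℝ) ^ N ≤ a N) (ha_one : ∀ N, a N ≤ 1) :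
    (1 + x / M) ^ M ≤ ∑' N : ℕ, x ^ N / N ! * a N := by
  have ha_nonneg (N : ℕ) : 0 ≤ a N := le_trans (by positivity) (ha N)
  have hterm_nonneg (N : ℕ) : 0 ≤ x ^ N / N ! * a N := mul_nonneg (by positivity) (ha_nonneg N)
  have hsum : Summable fun N : ℕ => x ^ N / N ! * a N :=
    .of_nonneg_of_le hterm_nonneg (fun N => mul_le_of_le_one_right (by positivity) (ha_one N))
      (hasSum_pow_div_factorial x).summable
  calc (1 + x / M) ^ M
      = ∑ N ∈ Finset.range (M + 1), x ^ N / N ! * (M.descFactorial N / (M : ℝ) ^ N) := by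
        rw [add_comm, add_pow]
        refine Finset.sum_congr rfl fun N _ => ?_
        rw [Nat.descFactorial_eq_factorial_mul_choose, one_pow, div_pow]
        push_cast
        field_simp
    _ ≤ ∑ N ∈ Finset.range (M + 1), x ^ N / N ! * a N := by
        gcongr with N
        exact ha N
    _ ≤ ∑' N : ℕ, x ^ N / N ! * a N := hsum.sum_le_tsum _ fun N _ => hterm_nonneg N

lemma exp_sub_sq_le_one_add {y : ℝ} (hy : 0 ≤ y) : exp (y - y ^ 2) ≤ 1 + y := by
  have hexp : 1 - y + y ^ 2 ≤ exp (-(y - y ^ 2)) := by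
    linarith [add_one_le_exp (-(y - y ^ 2))]
  have hone : 1 ≤ (1 + y) * exp (-(y - y ^ 2)) := calc
    1 ≤ (1 + y) * (1 - y + y ^ 2) := by linarith [pow_nonneg hy 3]
    _ ≤ (1 + y) * exp (-(y - y ^ 2)) := by gcongr
  rwa [exp_neg, ← div_eq_mul_inv, one_le_div (exp_pos _)] at hone

lemma exp_sub_sq_div_le_one_add_div_pow {x : ℝ} {M : ℕ} (hx : 0 ≤ x) (hM : 0 < M) :
    exp (x - x ^ 2 / M) ≤ (1 + x / M) ^ M := calc
  exp (x - x ^ 2 / M) = exp (x / M - (x / M) ^ 2) ^ M := by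
    rw [← exp_nat_mul]
    field_simp
  _ ≤ (1 + x / M) ^ M := by
    gcongr
    exact exp_sub_sq_le_one_add (by positivity)

/-! ### Integration over finite products -/

lemma integrable_prod_eval {E : Type*} [MeasureSpace E] [SigmaFinite (volume : Measure E)]
    {f : E → ℝ} (hf : Integrable f) (N : ℕ) : Integrable fun Z : Fin N → E => ∏ i, f (Z i) :=
  .fintype_prod (f := fun _ : Fin N => f) fun _ => hf

section FinCons

variable {E : Type*} [MeasureSpace E] [SigmaFinite (volume : Measure E)]
  {G : Type*} [NormedAddCommGroup G] {f : (Fin (N + 1) → E) → G}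

lemma measurePreserving_finCons (E : Type*) [MeasureSpace E] [SigmaFinite (volume : Measure E)]
    (N : ℕ) :
    MeasurePreserving fun p : E × (Fin N → E) => (Fin.cons p.1 p.2 : Fin (N + 1) → E) := by
  convert (volume_preserving_piFinSuccAbove (fun _ : Fin (N + 1) => E) 0).symm using 2 with p
  simp [MeasurableEquiv.piFinSuccAbove, Fin.insertNthEquiv, Fin.insertNth_zero']

lemma integrable_comp_finCons (hf : Integrable f) :
    Integrable fun p : E × (Fin N → E) => f (Fin.cons p.1 p.2) :=
  (measurePreserving_finCons E N).integrable_comp_of_integrable hf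

variable [NormedSpace ℝ G]

lemma integral_finCons (hf : Integrable f) :
    ∫ X, f X = ∫ X : Fin N → E, ∫ x, f (Fin.cons x X) := by
  have hcons := measurePreserving_finCons E N
  rw [← hcons.map_eq, integral_map hcons.aemeasurable
    (hcons.map_eq.symm ▸ hf.aestronglyMeasurable)]
  exact integral_prod_symm _ (integrable_comp_finCons hf)

lemma integrable_integral_finCons (hf : Integrable f) :
    Integrable fun X : Fin N → E => ∫ x, f (Fin.cons x X) :=
  (integrable_comp_finCons hf).integral_prod_right

end FinCons

/-! ### Excluded volume -/

instance : IsProbabilityMeasure (volume : Measure (AddCircle (1 : ℝ))) :=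
  ⟨by simp [AddCircle.measure_univ]⟩

lemma measureReal_closedBall_le (x : Torus d) (hε : 0 ≤ ε) :
    volume.real (Metric.closedBall x ε) ≤ (2 * ε) ^ d := by
  refine ENNReal.toReal_le_of_le_ofReal (by positivity) ?_
  calc volume (Metric.closedBall x ε)
      = ∏ i, volume (Metric.closedBall (x i) ε) := volume_pi_closedBall x hε
    _ ≤ ∏ _i : Fin d, ENNReal.ofReal (2 * ε) := by
        gcongr
        rw [AddCircle.volume_closedBall]
        exact ENNReal.ofReal_le_ofReal (min_le_right _ _)
    _ = ENNReal.ofReal ((2 * ε) ^ d) := by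
        rw [Finset.prod_const, Finset.card_fin, ENNReal.ofReal_pow (by positivity)]

lemma torusDist_comm (x y : Torus d) : torusDist x y = torusDist y x := by
  simp only [torusDist, dist_comm]

lemma dist_le_torusDist (x y : Torus d) : dist x y ≤ torusDist x y := by
  refine (dist_pi_le_iff (sqrt_nonneg _)).2 fun i => le_sqrt_of_sq_le ?_
  exact Finset.single_le_sum (f := fun i => dist (x i) (y i) ^ 2)
    (fun _ _ => sq_nonneg _) (Finset.mem_univ i)

lemma measurable_torusDist {α : Type*} [MeasurableSpace α] {f g : α → Torus d}
    (hf : Measurable f) (hg : Measurable g) : Measurable fun a => torusDist (f a) (g a) := by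
  unfold torusDist
  fun_prop

lemma exclInd_nonneg (ε : ℝ) (X : Fin N → Torus d) : 0 ≤ exclInd ε X := by
  unfold exclInd
  split_ifs <;> norm_num

lemma exclInd_le_one (ε : ℝ) (X : Fin N → Torus d) : exclInd ε X ≤ 1 := by
  unfold exclInd
  split_ifs <;> norm_num

lemma measurable_exclInd (d N : ℕ) (ε : ℝ) :
    Measurable fun X : Fin N → Torus d => exclInd ε X := by
  refine Measurable.ite ?_ measurable_const measurable_const
  simp only [Set.ofPred_forall]
  refine .iInter fun i => .iInter fun j => .iInter fun _ => ?_
  exact measurableSet_lt measurable_const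
    (measurable_torusDist (measurable_pi_apply i) (measurable_pi_apply j))

lemma integrable_exclInd (d N : ℕ) (ε : ℝ) :
    Integrable fun X : Fin N → Torus d => exclInd ε X :=
  .of_mem_Icc 0 1 (measurable_exclInd d N ε).aemeasurable
    (ae_of_all _ fun X => ⟨exclInd_nonneg ε X, exclInd_le_one ε X⟩)

/-- The region of the torus in which the centre of a further sphere may be placed once spheres of
diameter `ε` sit at the points of `X`. -/
def freeRegion (ε : ℝ) (X : Fin N → Torus d) : Set (Torus d) :=
  {x | ∀ i, ε < torusDist x (X i)}

lemma measurableSet_freeRegion (ε : ℝ) (X : Fin N → Torus d) :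
    MeasurableSet (freeRegion ε X) := by
  simp only [freeRegion, Set.ofPred_forall]
  exact .iInter fun i => measurableSet_lt measurable_const
    (measurable_torusDist measurable_id measurable_const)

lemma one_sub_le_measureReal_freeRegion (hε : 0 ≤ ε) (X : Fin N → Torus d) :
    1 - N * (2 * ε) ^ d ≤ volume.real (freeRegion ε X) := by
  have hcover : (freeRegion ε X)ᶜ ⊆ ⋃ i, Metric.closedBall (X i) ε := by
    intro x hx
    obtain ⟨i, hi⟩ : ∃ i, torusDist x (X i) ≤ ε := by
      simpa [freeRegion] using hx
    exact Set.mem_iUnion.2 ⟨i, (dist_le_torusDist _ _).trans hi⟩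
  have hcompl : volume.real (freeRegion ε X)ᶜ ≤ N * (2 * ε) ^ d := calc
    volume.real (freeRegion ε X)ᶜ
        ≤ ∑ i, volume.real (Metric.closedBall (X i) ε) :=
          (measureReal_mono hcover).trans (measureReal_iUnion_fintype_le _)
    _ ≤ ∑ _i : Fin N, (2 * ε) ^ d := by
          gcongr with i
          exact measureReal_closedBall_le (X i) hε
    _ = N * (2 * ε) ^ d := by simp
  rw [probReal_compl_eq_one_sub (measurableSet_freeRegion ε X)] at hcompl
  linarith

lemma exclInd_cons (ε : ℝ) (x : Torus d) (X : Fin N → Torus d) :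
    exclInd ε (Fin.cons x X : Fin (N + 1) → Torus d)
      = exclInd ε X * (freeRegion ε X).indicator 1 x := by
  have hiff : (∀ i j : Fin (N + 1), i ≠ j → ε < torusDist ((Fin.cons x X : Fin (N + 1) → Torus d) i)
        ((Fin.cons x X : Fin (N + 1) → Torus d) j)) ↔
      (∀ i j, i ≠ j → ε < torusDist (X i) (X j)) ∧ x ∈ freeRegion ε X := by
    simp only [Fin.forall_fin_succ, Fin.cons_zero, Fin.cons_succ, freeRegion, Set.mem_ofPred_eq,
      torusDist_comm _ x, ne_eq, Fin.succ_inj, Fin.succ_ne_zero, (Fin.succ_ne_zero _).symm,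
      not_true_eq_false, not_false_eq_true, false_implies, true_implies, true_and, forall_and]
    exact ⟨fun h => ⟨h.2.2, h.1⟩, fun h => ⟨h.2, h.2, h.1⟩⟩
  by_cases hX : ∀ i j, i ≠ j → ε < torusDist (X i) (X j) <;>
    by_cases hx : x ∈ freeRegion ε X <;> simp [exclInd, hiff, hX, hx]

lemma integral_exclInd_cons (ε : ℝ) (X : Fin N → Torus d) :
    ∫ x, exclInd ε (Fin.cons x X : Fin (N + 1) → Torus d)
      = exclInd ε X * volume.real (freeRegion ε X) := by
  simp only [exclInd_cons, integral_const_mul,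
    integral_indicator_one (measurableSet_freeRegion ε X)]

/-! ### Lower bound on the partition function -/

/-- The canonical partition function of `N` hard spheres of diameter `ε`: the volume of the set of
admissible configurations. -/
noncomputable def canonicalZ (d N : ℕ) (ε : ℝ) : ℝ := ∫ X : Fin N → Torus d, exclInd ε X

lemma canonicalZ_le_one (d N : ℕ) (ε : ℝ) : canonicalZ d N ε ≤ 1 := calc
  canonicalZ d N ε ≤ ∫ _X : Fin N → Torus d, (1 : ℝ) :=
    integral_mono (integrable_exclInd d N ε) (integrable_const 1) (exclInd_le_one ε)
  _ = 1 := by simp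

lemma canonicalZ_succ (d N : ℕ) (ε : ℝ) :
    canonicalZ d (N + 1) ε
      = ∫ X : Fin N → Torus d, exclInd ε X * volume.real (freeRegion ε X) := by
  rw [canonicalZ, integral_finCons (integrable_exclInd d (N + 1) ε)]
  simp only [integral_exclInd_cons]

lemma canonicalZ_mul_le_canonicalZ_succ (d N : ℕ) (hε : 0 ≤ ε) :
    canonicalZ d N ε * (1 - N * (2 * ε) ^ d) ≤ canonicalZ d (N + 1) ε := by
  have hint : Integrable fun X : Fin N → Torus d =>
      exclInd ε X * volume.real (freeRegion ε X) := by
    simpa only [integral_exclInd_cons] using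
      integrable_integral_finCons (integrable_exclInd d (N + 1) ε)
  rw [canonicalZ_succ, canonicalZ, ← integral_mul_const]
  refine integral_mono ((integrable_exclInd d N ε).mul_const _) hint fun X => ?_
  exact mul_le_mul_of_nonneg_left (one_sub_le_measureReal_freeRegion hε X) (exclInd_nonneg ε X)

lemma descFactorial_div_pow_le_canonicalZ (hε : 0 ≤ ε) {M : ℕ} (hM : M * (2 * ε) ^ d ≤ 1) (N : ℕ) :
    M.descFactorial N / (M : ℝ) ^ N ≤ canonicalZ d N ε := by
  have hnonneg (n : ℕ) : 0 ≤ canonicalZ d n ε := integral_nonneg (exclInd_nonneg ε)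
  induction N with
  | zero => simp [canonicalZ, exclInd]
  | succ n ih =>
    rcases le_or_gt M n with hMn | hnM
    · rw [Nat.descFactorial_of_lt (Nat.lt_succ_of_le hMn), Nat.cast_zero, zero_div]
      exact hnonneg (n + 1)
    · have hM_pos : (0 : ℝ) < M := by exact_mod_cast hnM.pos
      have hstep : ((M - n : ℕ) : ℝ) / M ≤ 1 - n * (2 * ε) ^ d := by
        rw [Nat.cast_sub hnM.le, sub_div, div_self hM_pos.ne', div_eq_mul_inv]
        gcongr
        rwa [inv_eq_one_div, le_div_iff₀' hM_pos]
      calc ((M.descFactorial (n + 1) : ℕ) : ℝ) / (M : ℝ) ^ (n + 1)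
          = M.descFactorial n / (M : ℝ) ^ n * ((M - n : ℕ) / M) := by
            rw [Nat.descFactorial_succ, Nat.cast_mul, pow_succ]
            ring
        _ ≤ canonicalZ d n ε * (1 - n * (2 * ε) ^ d) := by
            gcongr
            exact hnonneg n
        _ ≤ canonicalZ d (n + 1) ε := canonicalZ_mul_le_canonicalZ_succ d n hε

lemma muBG_nonneg (d : ℕ) (hε : 0 ≤ ε) : 0 ≤ muBG d ε := by
  unfold muBG
  positivity

lemma muBG_mul_pow (hd : d ≠ 0) (hε : 0 < ε) : muBG d ε * (2 * ε) ^ d = 2 ^ d * ε := by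
  obtain ⟨k, rfl⟩ := Nat.exists_eq_succ_of_ne_zero hd
  rw [muBG, Nat.succ_sub_one, mul_pow, pow_succ ε]
  field_simp

lemma partitionZ_nonneg (d : ℕ) (hε : 0 ≤ ε) : 0 ≤ partitionZ d ε :=
  tsum_nonneg fun _ => mul_nonneg (div_nonneg (pow_nonneg (muBG_nonneg d hε) _) (by positivity))
    (integral_nonneg (exclInd_nonneg ε))

lemma one_add_muBG_div_pow_le_partitionZ (hε : 0 ≤ ε) {M : ℕ} (hM : M * (2 * ε) ^ d ≤ 1) :
    (1 + muBG d ε / M) ^ M ≤ partitionZ d ε :=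
  one_add_div_pow_le_tsum (muBG_nonneg d hε) (descFactorial_div_pow_le_canonicalZ hε hM)
    fun N => canonicalZ_le_one d N ε

lemma exp_le_partitionZ (hd : d ≠ 0) (hε : 0 < ε) (hε_le : 2 * ε ≤ 1) :
    exp (muBG d ε * (1 - 2 ^ (d + 1) * ε)) ≤ partitionZ d ε := by
  have hμ := muBG_nonneg d hε.le
  set v := (2 * ε) ^ d
  have hv_pos : 0 < v := by positivity
  have hv_le : 1 ≤ v⁻¹ := (one_le_inv₀ hv_pos).2 (pow_le_one₀ (by positivity) hε_le)
  set M := ⌊v⁻¹⌋₊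
  have hM_pos : 0 < M := Nat.floor_pos.2 hv_le
  have hMv : M * v ≤ 1 := (le_div_iff₀ hv_pos).1 ((Nat.floor_le (by positivity)).trans_eq
    (one_div v).symm)
  have hM_inv : (M : ℝ)⁻¹ ≤ 2 * v := by
    have hM_one : (1 : ℝ) ≤ M := by exact_mod_cast hM_pos
    rw [inv_le_comm₀ (by positivity) (by positivity), mul_inv]
    linarith [Nat.lt_floor_add_one v⁻¹]
  calc exp (muBG d ε * (1 - 2 ^ (d + 1) * ε))
      = exp (muBG d ε - muBG d ε ^ 2 * (2 * v)) := by
        congr 1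
        linear_combination (2 * muBG d ε) * muBG_mul_pow hd hε
    _ ≤ exp (muBG d ε - muBG d ε ^ 2 / M) := by
        rw [div_eq_mul_inv]
        gcongr
    _ ≤ (1 + muBG d ε / M) ^ M := exp_sub_sq_div_le_one_add_div_pow hμ hM_pos
    _ ≤ partitionZ d ε := one_add_muBG_div_pow_le_partitionZ hε.le hMv

/-! ### The Maxwellian -/

lemma maxwellian_nonneg (v : EuclideanSpace ℝ (Fin d)) : 0 ≤ maxwellian v := by
  unfold maxwellian
  positivity

lemma measurable_maxwellian (d : ℕ) :
    Measurable (maxwellian : EuclideanSpace ℝ (Fin d) → ℝ) := by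
  unfold maxwellian
  fun_prop

lemma integral_maxwellian (d : ℕ) : ∫ v : EuclideanSpace ℝ (Fin d), maxwellian v = 1 := by
  have hgauss := GaussianFourier.integral_rexp_neg_mul_sq_norm
    (V := EuclideanSpace ℝ (Fin d)) (b := 2⁻¹) (by norm_num)
  have hexponent (v : EuclideanSpace ℝ (Fin d)) : -‖v‖ ^ 2 / 2 = -2⁻¹ * ‖v‖ ^ 2 := by ring
  simp only [maxwellian, hexponent]
  rw [integral_const_mul, hgauss, div_inv_eq_mul, mul_comm π, ← rpow_add (by positivity)]
  simp [neg_div]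

lemma integral_maxwellian_snd (d : ℕ) : ∫ z : Phase d, maxwellian z.2 = 1 := by
  rw [Measure.volume_eq_prod, integral_fun_snd (maxwellian : EuclideanSpace ℝ (Fin d) → ℝ),
    integral_maxwellian, probReal_univ, one_smul]

/-- The law `𝓜(v) dx dv` of a single particle of the ideal gas on the phase space. -/
noncomputable def maxwellMeasure (d : ℕ) : Measure (Phase d) :=
  volume.withDensity fun z => ENNReal.ofReal (maxwellian z.2)

lemma measurable_ofReal_maxwellian (d : ℕ) :
    Measurable fun z : Phase d => ENNReal.ofReal (maxwellian z.2) :=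
  ((measurable_maxwellian d).comp measurable_snd).ennreal_ofReal

lemma integral_maxwellMeasure (f : Phase d → ℝ) :
    ∫ z, f z ∂maxwellMeasure d = ∫ z : Phase d, f z * maxwellian z.2 := by
  rw [maxwellMeasure, integral_withDensity_eq_integral_toReal_smul (measurable_ofReal_maxwellian d)
    (by simp)]
  simp only [ENNReal.toReal_ofReal (maxwellian_nonneg _), smul_eq_mul, mul_comm]

lemma integrable_maxwellMeasure_iff {f : Phase d → ℝ} :
    Integrable f (maxwellMeasure d) ↔ Integrable fun z : Phase d => f z * maxwellian z.2 := by
  rw [maxwellMeasure, integrable_withDensity_iff (measurable_ofReal_maxwellian d) (by simp)]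
  simp only [ENNReal.toReal_ofReal (maxwellian_nonneg _)]

instance (d : ℕ) : IsProbabilityMeasure (maxwellMeasure d) := by
  have hint : Integrable fun z : Phase d => maxwellian z.2 :=
    .of_integral_ne_zero (by simp [integral_maxwellian_snd])
  refine ⟨?_⟩
  rw [maxwellMeasure, withDensity_apply _ .univ, Measure.restrict_univ,
    ← ofReal_integral_eq_lintegral_ofReal hint (ae_of_all _ fun z => maxwellian_nonneg z.2),
    integral_maxwellian_snd, ENNReal.ofReal_one]

/-! ### Comparison with the ideal gas -/

/-- `HasIdealGasSum x G S` says that the unnormalised grand canonical average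
`∑_N (x^N / N!) ∫ G dν^{⊗N}` of the functional `G` over the ideal gas of activity `x`, where `ν` is
`maxwellMeasure d`, converges to `S`. -/
structure HasIdealGasSum (x : ℝ) (G : (N : ℕ) → (Fin N → Phase d) → ℝ) (S : ℝ) : Prop where
  integrable (N : ℕ) : Integrable fun Z : Fin N → Phase d => (∏ i, maxwellian (Z i).2) * G N Z
  hasSum : HasSum
    (fun N : ℕ => x ^ N / N ! * ∫ Z : Fin N → Phase d, (∏ i, maxwellian (Z i).2) * G N Z) S

namespace HasIdealGasSum

variable {x S S' : ℝ} {G G' : (N : ℕ) → (Fin N → Phase d) → ℝ}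

lemma add (hG : HasIdealGasSum x G S) (hG' : HasIdealGasSum x G' S') :
    HasIdealGasSum x (fun N Z => G N Z + G' N Z) (S + S') where
  integrable N := by
    simp only [mul_add]
    exact (hG.integrable N).add (hG'.integrable N)
  hasSum := by
    simpa only [mul_add, integral_add (hG.integrable _) (hG'.integrable _)] using
      hG.hasSum.add hG'.hasSum

lemma const_mul (hG : HasIdealGasSum x G S) (c : ℝ) :
    HasIdealGasSum x (fun N Z => c * G N Z) (c * S) where
  integrable N := by simpa only [mul_left_comm _ c] using (hG.integrable N).const_mul c
  hasSum := by
    simpa only [mul_left_comm _ c, integral_const_mul] using hG.hasSum.mul_left c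

lemma exp_sum {h : Phase d → ℝ} {t : ℝ} (x : ℝ) (ht : t ∈ integrableExpSet h (maxwellMeasure d)) :
    HasIdealGasSum x (fun _ Z => exp (t * ∑ i, h (Z i)))
      (exp (x * mgf h (maxwellMeasure d) t)) := by
  have hprod (N : ℕ) (Z : Fin N → Phase d) :
      (∏ i, maxwellian (Z i).2) * exp (t * ∑ i, h (Z i))
        = ∏ i, exp (t * h (Z i)) * maxwellian (Z i).2 := by
    rw [Finset.mul_sum, Real.exp_sum, Finset.prod_mul_distrib, mul_comm]
  have hint : Integrable fun z : Phase d => exp (t * h z) * maxwellian z.2 :=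
    integrable_maxwellMeasure_iff.1 ht
  constructor
  · intro N
    simp only [hprod]
    exact integrable_prod_eval hint N
  · simpa only [hprod, integral_fintype_prod_volume_eq_pow fun z : Phase d =>
      exp (t * h z) * maxwellian z.2, Fintype.card_fin, mgf, integral_maxwellMeasure, mul_pow,
      div_mul_eq_mul_div] using hasSum_pow_div_factorial (x * mgf h (maxwellMeasure d) t)

end HasIdealGasSum

section GrandCanonical

variable {F G : (N : ℕ) → (Fin N → Phase d) → ℝ} {S : ℝ}

lemma exclInd_mul_prod_maxwellian_nonneg (ε : ℝ) (Z : Fin N → Phase d) :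
    0 ≤ exclInd ε (fun i => (Z i).1) * ∏ i, maxwellian (Z i).2 :=
  mul_nonneg (exclInd_nonneg _ _) (Finset.prod_nonneg fun _ _ => maxwellian_nonneg _)

lemma gceExp_nonneg (hε : 0 ≤ ε) (hF : ∀ N Z, 0 ≤ F N Z) : 0 ≤ gceExp d ε F :=
  mul_nonneg (inv_nonneg.2 (partitionZ_nonneg d hε)) <| tsum_nonneg fun N =>
    mul_nonneg (div_nonneg (pow_nonneg (muBG_nonneg d hε) _) (by positivity)) <|
      integral_nonneg fun Z => mul_nonneg (exclInd_mul_prod_maxwellian_nonneg ε Z) (hF N Z)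

lemma integral_exclInd_mul_le (hF : ∀ Z : Fin N → Phase d, 0 ≤ F N Z) (hFG : ∀ Z, F N Z ≤ G N Z)
    (hG : Integrable fun Z : Fin N → Phase d => (∏ i, maxwellian (Z i).2) * G N Z) :
    ∫ Z, exclInd ε (fun i => (Z i).1) * (∏ i, maxwellian (Z i).2) * F N Z
      ≤ ∫ Z, (∏ i, maxwellian (Z i).2) * G N Z := by
  refine integral_mono_of_nonneg (ae_of_all _ fun Z =>
    mul_nonneg (exclInd_mul_prod_maxwellian_nonneg ε Z) (hF Z)) hG (ae_of_all _ fun Z => ?_)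
  have hprod : 0 ≤ ∏ i, maxwellian (Z i).2 := Finset.prod_nonneg fun _ _ => maxwellian_nonneg _
  exact mul_le_mul (mul_le_of_le_one_left hprod (exclInd_le_one _ _)) (hFG Z) (hF Z) hprod

lemma gceExp_le_of_hasIdealGasSum (hε : 0 ≤ ε) (hF : ∀ N Z, 0 ≤ F N Z)
    (hFG : ∀ N Z, F N Z ≤ G N Z) (hG : HasIdealGasSum (muBG d ε) G S) :
    gceExp d ε F ≤ (partitionZ d ε)⁻¹ * S := by
  have hcoeff (N : ℕ) : 0 ≤ muBG d ε ^ N / N ! :=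
    div_nonneg (pow_nonneg (muBG_nonneg d hε) N) (by positivity)
  have hterm (N : ℕ) := mul_le_mul_of_nonneg_left
    (integral_exclInd_mul_le (ε := ε) (hF N) (hFG N) (hG.integrable N)) (hcoeff N)
  have hsum := Summable.of_nonneg_of_le (fun N => mul_nonneg (hcoeff N) <|
    integral_nonneg fun Z => mul_nonneg (exclInd_mul_prod_maxwellian_nonneg ε Z) (hF N Z))
    hterm hG.hasSum.summable
  exact mul_le_mul_of_nonneg_left (hasSum_le hterm hsum.hasSum hG.hasSum)
    (inv_nonneg.2 (partitionZ_nonneg d hε))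

end GrandCanonical

/-! ### Exponential concentration -/

lemma ite_lt_abs_le_exp_add_exp {a : ℝ} (ha : 0 ≤ a) (δ y : ℝ) :
    (if δ < |y| then (1 : ℝ) else 0) ≤ exp (a * (y - δ)) + exp (a * (-y - δ)) := by
  split_ifs with hy
  · rcases lt_abs.1 hy with hy | hy
    · exact (one_le_exp (mul_nonneg ha (by linarith))).trans
        (le_add_of_nonneg_right (exp_pos _).le)
    · exact (one_le_exp (mul_nonneg ha (by linarith))).trans
        (le_add_of_nonneg_left (exp_pos _).le)
  · positivity

lemma gceExp_deviation_le {h : Phase d → ℝ} {t : ℝ} (hε : 0 < ε) (ht : 0 ≤ t)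
    (hpos : t ∈ integrableExpSet h (maxwellMeasure d))
    (hneg : -t ∈ integrableExpSet h (maxwellMeasure d)) (m δ : ℝ) :
    gceExp d ε (fun N Z => if δ < |empDens ε h N Z - m| then 1 else 0) ≤
      (partitionZ d ε)⁻¹ *
        (exp (muBG d ε * (mgf h (maxwellMeasure d) t - t * (m + δ))) +
          exp (muBG d ε * (mgf h (maxwellMeasure d) (-t) + t * (m - δ)))) := by
  set μ := muBG d ε
  have hμ : 0 < μ := inv_pos.2 (pow_pos hε _)
  have hideal := ((HasIdealGasSum.exp_sum μ hpos).const_mul (exp (-(μ * (t * (m + δ)))))).add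
    ((HasIdealGasSum.exp_sum μ hneg).const_mul (exp (μ * (t * (m - δ)))))
  simp only [← exp_add] at hideal
  refine (gceExp_le_of_hasIdealGasSum hε.le (fun N Z => ?_) (fun N Z => ?_) hideal).trans_eq ?_
  · split_ifs <;> norm_num
  · have hsum : ∑ i, h (Z i) = μ * empDens ε h N Z := by
      rw [empDens, mul_inv_cancel_left₀ hμ.ne']
    refine (ite_lt_abs_le_exp_add_exp (mul_nonneg hμ.le ht) δ _).trans_eq ?_
    rw [hsum]
    ring_nf
  · ring_nf

lemma exists_mgf_le_and_mgf_neg_le {Ω : Type*} [MeasurableSpace Ω] {P : Measure Ω}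
    [IsProbabilityMeasure P] {X : Ω → ℝ} (hX : 0 ∈ interior (integrableExpSet X P)) {η : ℝ}
    (hη : 0 < η) :
    ∃ t > 0, t ∈ integrableExpSet X P ∧ -t ∈ integrableExpSet X P ∧
      mgf X P t ≤ 1 + t * (P[X] + η) ∧ mgf X P (-t) ≤ 1 - t * (P[X] - η) := by
  have hderiv : HasDerivAt (mgf X P) P[X] 0 := by simpa using hasDerivAt_mgf hX
  have hlin : ∀ᶠ u in 𝓝 0, mgf X P u ≤ 1 + u * P[X] + η * |u| := by
    filter_upwards [hderiv.isLittleO.def hη] with u hu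
    simp only [mgf_zero, sub_zero, smul_eq_mul, norm_eq_abs] at hu
    linarith [(abs_le.1 hu).2]
  have hgood : ∀ᶠ u in 𝓝 0, u ∈ integrableExpSet X P ∧ mgf X P u ≤ 1 + u * P[X] + η * |u| :=
    Filter.Eventually.and (mem_interior_iff_mem_nhds.1 hX) hlin
  have hneg : Tendsto (fun u : ℝ => -u) (𝓝 0) (𝓝 0) := by simpa using tendsto_neg (0 : ℝ)
  obtain ⟨t, ⟨⟨ht_mem, ht_mgf⟩, hnt_mem, hnt_mgf⟩, ht : 0 < t⟩ :=
    ((hgood.and (hneg.eventually hgood)).filter_mono nhdsWithin_le_nhds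
      |>.and (self_mem_nhdsWithin : Set.Ioi (0 : ℝ) ∈ 𝓝[>] 0)).exists
  rw [abs_neg, abs_of_pos ht] at hnt_mgf
  rw [abs_of_pos ht] at ht_mgf
  exact ⟨t, ht, ht_mem, hnt_mem, by linarith, by linarith⟩

theorem exists_eventually_gceExp_deviation_le_exp (hd : d ≠ 0) {h : Phase d → ℝ}
    (hexp : 0 ∈ interior (integrableExpSet h (maxwellMeasure d))) {δ : ℝ} (hδ : 0 < δ) :
    ∃ c > 0, ∀ᶠ ε in 𝓝[>] 0,
      gceExp d ε (fun N Z =>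
          if δ < |empDens ε h N Z - ∫ z : Phase d, h z * maxwellian z.2| then 1 else 0)
        ≤ 2 * exp (-(muBG d ε * c)) := by
  obtain ⟨t, ht, ht_mem, hnt_mem, ht_mgf, hnt_mgf⟩ :=
    exists_mgf_le_and_mgf_neg_le hexp (half_pos hδ)
  rw [integral_maxwellMeasure] at ht_mgf hnt_mgf
  set m := ∫ z : Phase d, h z * maxwellian z.2
  have hsmall : ∀ᶠ ε : ℝ in 𝓝 0, 2 * ε < 1 ∧ 2 ^ (d + 1) * ε < t * δ / 4 := by
    refine .and ?_ ?_ <;>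
      exact (Continuous.tendsto' (by fun_prop) _ 0 (mul_zero _)).eventually_lt_const
        (by positivity)
  refine ⟨t * δ / 4, by positivity, ?_⟩
  filter_upwards [hsmall.filter_mono nhdsWithin_le_nhds, self_mem_nhdsWithin]
    with ε ⟨hε_half, hε_small⟩ (hε : 0 < ε)
  have hμ := muBG_nonneg d hε.le
  have hpos : mgf h (maxwellMeasure d) t - t * (m + δ) ≤ 1 - t * δ / 2 := by linarith
  have hneg : mgf h (maxwellMeasure d) (-t) + t * (m - δ) ≤ 1 - t * δ / 2 := by linarith
  calc gceExp d ε (fun N Z => if δ < |empDens ε h N Z - m| then 1 else 0)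
      ≤ (partitionZ d ε)⁻¹ *
          (exp (muBG d ε * (mgf h (maxwellMeasure d) t - t * (m + δ))) +
            exp (muBG d ε * (mgf h (maxwellMeasure d) (-t) + t * (m - δ)))) :=
        gceExp_deviation_le hε ht.le ht_mem hnt_mem m δ
    _ ≤ (exp (muBG d ε * (1 - 2 ^ (d + 1) * ε)))⁻¹ *
          (exp (muBG d ε * (1 - t * δ / 2)) + exp (muBG d ε * (1 - t * δ / 2))) := by
        gcongr
        exact exp_le_partitionZ hd hε hε_half.le
    _ = 2 * exp (muBG d ε * (2 ^ (d + 1) * ε - t * δ / 2)) := by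
        rw [← two_mul, mul_left_comm, ← exp_neg, ← exp_add]
        ring_nf
    _ ≤ 2 * exp (-(muBG d ε * (t * δ / 4))) := by
        rw [← mul_neg]
        gcongr
        linarith

lemma tendsto_muBG_atTop (hd : 2 ≤ d) : Tendsto (muBG d) (𝓝[>] 0) atTop :=
  tendsto_inv_nhdsGT_zero.comp <| tendsto_nhdsWithin_iff.2
    ⟨((continuous_pow (d - 1)).tendsto' 0 0 (zero_pow (by omega))).mono_left nhdsWithin_le_nhds,
      eventually_mem_nhdsWithin.mono fun _ hε => pow_pos (Set.mem_Ioi.1 hε) (d - 1)⟩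

end HardSphere

theorem static_lln_general (d : ℕ) (hd : 2 ≤ d) (h : Phase d → ℝ)
    (hexp : 0 ∈ interior
      (ProbabilityTheory.integrableExpSet h (HardSphere.maxwellMeasure d)))
    (δ : ℝ) (hδ : 0 < δ) :
    Filter.Tendsto
      (fun ε : ℝ =>
        gceExp d ε (fun N Z =>
          if δ < |empDens ε h N Z - ∫ z : Phase d, h z * maxwellian z.2| then 1 else 0))
      (nhdsWithin 0 (Set.Ioi 0)) (nhds 0) := by
  obtain ⟨c, hc, hle⟩ :=
    HardSphere.exists_eventually_gceExp_deviation_le_exp (by omega) hexp hδ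
  have hbound : Filter.Tendsto (fun ε => 2 * exp (-(muBG d ε * c))) (nhdsWithin 0 (Set.Ioi 0))
      (nhds 0) := by
    simpa using (tendsto_exp_neg_atTop_nhds_zero.comp
      ((HardSphere.tendsto_muBG_atTop hd).atTop_mul_const hc)).const_mul 2
  refine squeeze_zero' ?_ hle hbound
  filter_upwards [self_mem_nhdsWithin] with ε (hε : 0 < ε)
  exact HardSphere.gceExp_nonneg hε.le fun N Z => by split_ifs <;> norm_num

/- Static law of large numbers for the empirical density at equilibrium: for every
bounded measurable `h` and every `δ > 0`,
`ℙ^eq_ε(|π^ε(h) - ∫ h 𝓜 dz| > δ) → 0` as `ε → 0⁺` (the probability being written as the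
equilibrium expectation of the indicator of the event). -/
open Classical in
theorem static_lln (d : ℕ) (hd : 2 ≤ d) (h : Phase d → ℝ) (hm : Measurable h)
    (hb : ∃ B : ℝ, ∀ z, |h z| ≤ B) (δ : ℝ) (hδ : 0 < δ) :
    Filter.Tendsto
      (fun ε : ℝ =>
        gceExp d ε (fun N Z =>
          if δ < |empDens ε h N Z - ∫ z : Phase d, h z * maxwellian z.2| then 1 else 0))
      (nhdsWithin 0 (Set.Ioi 0)) (nhds 0) := by
  obtain ⟨B, hB⟩ := hb
  have hexp : ProbabilityTheory.integrableExpSet h (HardSphere.maxwellMeasure d) = Set.univ :=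
    Set.eq_univ_of_forall fun t => ProbabilityTheory.integrable_exp_mul_of_mem_Icc hm.aemeasurable
      (Filter.Eventually.of_forall fun z => abs_le.1 (hB z))
  exact static_lln_general d hd h (by simp [hexp]) δ hδ
end
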